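/- arXiv:1807.08672 — 3 statements merged into one kernel-verified Lean document; each statement's English description precedes it below -/
import Mathlib

section
/- For every z > 2, E|f_z′(W̄)| ≤ ((1/2) e^{−1/2} + e^{−1}/(2√(2π)) + e^{e − 2}) · e^{−z/2}. -/
open MeasureTheory ProbabilityTheory Real

/-- The standard normal cumulative distribution function. -/
noncomputable def Phi (z : ℝ) : ℝ :=
  (Real.sqrt (2 * Real.pi))⁻¹ * ∫ u in Set.Iic z, Real.exp (-u ^ 2 / 2)

/-- The bounded solution `f_z` of the Stein equation
`f'(w) - w f(w) = 1{w ≤ z} - Φ(z)`. -/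
noncomputable def fz (z w : ℝ) : ℝ :=
  if w ≤ z then Real.sqrt (2 * Real.pi) * Real.exp (w ^ 2 / 2) * Phi w * (1 - Phi z)
  else Real.sqrt (2 * Real.pi) * Real.exp (w ^ 2 / 2) * Phi z * (1 - Phi w)

/-- The derivative `f_z'`, expressed via the Stein equation. -/
noncomputable def fz' (z w : ℝ) : ℝ :=
  w * fz z w + (if w ≤ z then 1 else 0) - Phi z

/-- The truncation `x̄ᵢ = ξᵢ 1{ξᵢ ≤ 1}`. -/
noncomputable def xbar {Ω : Type*} {n : ℕ} (ξ : Fin n → Ω → ℝ) (i : Fin n) (ω : Ω) : ℝ :=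
  if ξ i ω ≤ 1 then ξ i ω else 0

/-- `W̄ = ∑ᵢ x̄ᵢ`. -/
noncomputable def Wbar {Ω : Type*} {n : ℕ} (ξ : Fin n → Ω → ℝ) (ω : Ω) : ℝ :=
  ∑ i, xbar ξ i ω

/-- `W̄⁽ⁱ⁾ = W̄ - x̄ᵢ`. -/
noncomputable def Wbari {Ω : Type*} {n : ℕ} (ξ : Fin n → Ω → ℝ) (i : Fin n) (ω : Ω) : ℝ :=
  Wbar ξ ω - xbar ξ i ω

/-- `K̄ᵢ(t) = E[x̄ᵢ (1{0 ≤ t ≤ x̄ᵢ} - 1{x̄ᵢ ≤ t < 0})]`. -/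
noncomputable def Kbar {Ω : Type*} [MeasureSpace Ω] {n : ℕ} (ξ : Fin n → Ω → ℝ)
    (i : Fin n) (t : ℝ) : ℝ :=
  ∫ ω, xbar ξ i ω * ((if 0 ≤ t ∧ t ≤ xbar ξ i ω then (1 : ℝ) else 0)
    - (if xbar ξ i ω ≤ t ∧ t < 0 then (1 : ℝ) else 0))

/-- `β₂ = ∑ᵢ E[ξᵢ² 1{|ξᵢ| > 1}]`. -/
noncomputable def beta2 {Ω : Type*} [MeasureSpace Ω] {n : ℕ} (ξ : Fin n → Ω → ℝ) : ℝ :=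
  ∑ i, ∫ ω, (if 1 < |ξ i ω| then (ξ i ω) ^ 2 else 0)

/-- `β₃ = ∑ᵢ E[|ξᵢ|³ 1{|ξᵢ| ≤ 1}]`. -/
noncomputable def beta3 {Ω : Type*} [MeasureSpace Ω] {n : ℕ} (ξ : Fin n → Ω → ℝ) : ℝ :=
  ∑ i, ∫ ω, (if |ξ i ω| ≤ 1 then |ξ i ω| ^ 3 else 0)

/-- The Gaussian tail integral. -/
noncomputable def gtail (w : ℝ) : ℝ := ∫ u in Set.Ioi w, Real.exp (-u ^ 2 / 2)

lemma gauss_integrable : Integrable (fun u : ℝ => Real.exp (-u ^ 2 / 2)) := by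
  have h := integrable_exp_neg_mul_sq (b := 1 / 2) (by norm_num)
  refine h.congr (Filter.Eventually.of_forall fun x => ?_)
  simp only
  congr 1
  ring

lemma gauss_total : ∫ u : ℝ, Real.exp (-u ^ 2 / 2) = Real.sqrt (2 * Real.pi) := by
  have h := integral_gaussian (1 / 2)
  have e : (fun u : ℝ => Real.exp (-u ^ 2 / 2)) = fun u => Real.exp (-(1 / 2) * u ^ 2) := by
    funext x
    congr 1
    ring
  rw [e, h]
  congr 1
  ring

lemma sqrt_two_pi_pos : 0 < Real.sqrt (2 * Real.pi) := by positivity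

lemma gtail_nonneg (w : ℝ) : 0 ≤ gtail w := by
  unfold gtail
  positivity

lemma Phi_eq (w : ℝ) : Real.sqrt (2 * Real.pi) * Phi w = gtail (-w) := by
  unfold Phi gtail
  rw [mul_inv_cancel_left₀ sqrt_two_pi_pos.ne']
  have h := integral_comp_neg_Iic w (fun u : ℝ => Real.exp (-u ^ 2 / 2))
  simpa using h

lemma one_sub_Phi_eq (w : ℝ) : Real.sqrt (2 * Real.pi) * (1 - Phi w) = gtail w := by
  have h := intervalIntegral.integral_Iic_add_Ioi (b := w) gauss_integrable.integrableOn
    gauss_integrable.integrableOn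
  rw [gauss_total] at h
  unfold Phi gtail
  rw [mul_sub, mul_inv_cancel_left₀ sqrt_two_pi_pos.ne']
  linarith

lemma Phi_nonneg (w : ℝ) : 0 ≤ Phi w := by
  have := Phi_eq w
  have h2 := gtail_nonneg (-w)
  rw [← this] at h2
  exact nonneg_of_mul_nonneg_right h2 sqrt_two_pi_pos

lemma Phi_le_one (w : ℝ) : Phi w ≤ 1 := by
  have h2 := gtail_nonneg w
  rw [← one_sub_Phi_eq w] at h2
  have := nonneg_of_mul_nonneg_right h2 sqrt_two_pi_pos
  linarith

lemma Phi_mono {a b : ℝ} (h : a ≤ b) : Phi a ≤ Phi b := by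
  unfold Phi
  refine mul_le_mul_of_nonneg_left ?_ (by positivity)
  exact setIntegral_mono_set gauss_integrable.integrableOn
    (Filter.Eventually.of_forall fun x => (Real.exp_pos _).le)
    (Set.Iic_subset_Iic.2 h).eventuallyLE

lemma mills (w : ℝ) : w * gtail w ≤ Real.exp (-w ^ 2 / 2) := by
  rcases le_or_gt w 0 with hw | hw
  · exact (mul_nonpos_of_nonpos_of_nonneg hw (gtail_nonneg w)).trans (Real.exp_pos _).le
  have hd : ∀ x ∈ Set.Ici w, HasDerivAt (fun u : ℝ => -Real.exp (-u ^ 2 / 2))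
      (x * Real.exp (-x ^ 2 / 2)) x := by
    intro x _
    have h1 : HasDerivAt (fun u : ℝ => -u ^ 2 / 2) (-x) x := by
      have := ((hasDerivAt_pow 2 x).neg).div_const 2
      have e : -((2 : ℕ) * x ^ (2 - 1)) / 2 = -x := by
        norm_num
        ring
      rw [e] at this
      exact this
    have h3 := h1.exp.neg
    have e : -(Real.exp (-x ^ 2 / 2) * -x) = x * Real.exp (-x ^ 2 / 2) := by ring
    rw [e] at h3
    exact h3
  have ht : Filter.Tendsto (fun u : ℝ => -Real.exp (-u ^ 2 / 2)) Filter.atTop (nhds 0) := by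
    have : Filter.Tendsto (fun u : ℝ => -u ^ 2 / 2) Filter.atTop Filter.atBot := by
      have h2 : Filter.Tendsto (fun u : ℝ => u ^ 2 / 2) Filter.atTop Filter.atTop :=
        (Filter.tendsto_pow_atTop (by norm_num)).atTop_div_const (by norm_num)
      have := Filter.tendsto_neg_atTop_atBot.comp h2
      refine this.congr fun x => ?_
      simp
      ring
    simpa using (Real.tendsto_exp_atBot.comp this).neg
  have hpos : ∀ x ∈ Set.Ioi w, 0 ≤ x * Real.exp (-x ^ 2 / 2) := by
    intro x hx
    have : 0 < x := hw.trans hx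
    positivity
  have hint := integrableOn_Ioi_deriv_of_nonneg' hd hpos ht
  have hval := integral_Ioi_of_hasDerivAt_of_nonneg' hd hpos ht
  have : w * gtail w ≤ ∫ x in Set.Ioi w, x * Real.exp (-x ^ 2 / 2) := by
    unfold gtail
    rw [← integral_const_mul]
    refine setIntegral_mono_on (gauss_integrable.integrableOn.const_mul w) hint
      measurableSet_Ioi fun x hx => ?_
    exact mul_le_mul_of_nonneg_right (le_of_lt hx) (Real.exp_pos _).le
  rw [hval] at this
  simpa using this

lemma exp_half_mul (w : ℝ) : Real.exp (w ^ 2 / 2) * Real.exp (-w ^ 2 / 2) = 1 := by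
  rw [← Real.exp_add, ← Real.exp_zero]
  congr 1
  ring

lemma mills' (w : ℝ) : w * (Real.exp (w ^ 2 / 2) * gtail w) ≤ 1 := by
  have h := mul_le_mul_of_nonneg_left (mills w) (Real.exp_pos (w ^ 2 / 2)).le
  rw [exp_half_mul] at h
  linarith

lemma mills_neg (w : ℝ) : -1 ≤ w * (Real.exp (w ^ 2 / 2) * gtail (-w)) := by
  have h := mills' (-w)
  rw [neg_sq] at h
  linarith

lemma fz'_of_le {z w : ℝ} (h : w ≤ z) :
    fz' z w = (1 - Phi z) * (1 + w * (Real.exp (w ^ 2 / 2) * gtail (-w))) := by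
  unfold fz' fz
  rw [if_pos h, if_pos h, ← Phi_eq]
  ring

lemma fz'_of_gt {z w : ℝ} (h : z < w) :
    fz' z w = Phi z * (w * (Real.exp (w ^ 2 / 2) * gtail w) - 1) := by
  unfold fz' fz
  rw [if_neg h.not_ge, if_neg h.not_ge, ← one_sub_Phi_eq]
  ring

lemma abs_fz'_le_one {z w : ℝ} (hz : 2 < z) : |fz' z w| ≤ 1 := by
  have hP0 := Phi_nonneg z
  have hP1 := Phi_le_one z
  rcases le_or_gt w z with h | h
  · rw [fz'_of_le h]
    have h1 := mills_neg w
    rw [abs_of_nonneg (mul_nonneg (by linarith) (by linarith))]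
    have key : (1 - Phi z) * (w * (Real.exp (w ^ 2 / 2) * gtail (-w))) ≤ Phi z := by
      rcases le_or_gt w 0 with hw | hw
      · refine le_trans ?_ hP0
        refine mul_nonpos_of_nonneg_of_nonpos (by linarith) ?_
        exact mul_nonpos_of_nonpos_of_nonneg hw
          (mul_nonneg (Real.exp_pos _).le (gtail_nonneg _))
      · have e1 : (1 - Phi z) * (w * (Real.exp (w ^ 2 / 2) * gtail (-w)))
            = Phi w * (w * (Real.exp (w ^ 2 / 2) * gtail z)) := by
          rw [← Phi_eq, ← one_sub_Phi_eq]
          ring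
        rw [e1]
        have e2 : w * (Real.exp (w ^ 2 / 2) * gtail z) ≤ 1 := by
          refine le_trans ?_ (mills' z)
          have := gtail_nonneg z
          gcongr
        calc Phi w * (w * (Real.exp (w ^ 2 / 2) * gtail z)) ≤ Phi w * 1 :=
              mul_le_mul_of_nonneg_left e2 (Phi_nonneg w)
          _ ≤ Phi z := by rw [mul_one]; exact Phi_mono h
    linarith
  · rw [fz'_of_gt h]
    have h1 := mills' w
    have h2 : 0 ≤ w * (Real.exp (w ^ 2 / 2) * gtail w) :=
      mul_nonneg (by linarith) (mul_nonneg (Real.exp_pos _).le (gtail_nonneg _))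
    rw [abs_mul, abs_of_nonneg hP0]
    have : |w * (Real.exp (w ^ 2 / 2) * gtail w) - 1| ≤ 1 := by
      rw [abs_le]
      constructor <;> linarith
    calc _ ≤ (1 : ℝ) * 1 := mul_le_mul hP1 this (abs_nonneg _) zero_le_one
      _ = 1 := one_mul _

lemma abs_fz'_le_left {z w : ℝ} (hz : 2 < z) (h : w ≤ z - 1) :
    |fz' z w| ≤ ((1 / 2) * Real.exp (-(1 / 2) : ℝ)
            + Real.exp (-1 : ℝ) / (2 * Real.sqrt (2 * Real.pi))) * Real.exp (-z / 2) := by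
  have hP1 := Phi_le_one z
  have hs := sqrt_two_pi_pos
  rw [fz'_of_le (by linarith)]
  have h1 := mills_neg w
  rw [abs_of_nonneg (mul_nonneg (by linarith) (by linarith))]
  have hg : gtail z ≤ Real.exp (-z ^ 2 / 2) / z := by
    rw [le_div_iff₀ (by linarith)]
    linarith [mills z]
  have hle : w * (Real.exp (w ^ 2 / 2) * gtail (-w))
      ≤ (z - 1) * (Real.exp ((z - 1) ^ 2 / 2) * Real.sqrt (2 * Real.pi)) := by
    rcases le_or_gt w 0 with hw | hw
    · refine le_trans (mul_nonpos_of_nonpos_of_nonneg hw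
          (mul_nonneg (Real.exp_pos _).le (gtail_nonneg _))) ?_
      have : 0 ≤ z - 1 := by linarith
      positivity
    · have h3 : gtail (-w) ≤ Real.sqrt (2 * Real.pi) := by
        rw [← Phi_eq]
        exact mul_le_of_le_one_right hs.le (Phi_le_one w)
      have := gtail_nonneg (-w)
      have h4 : 0 ≤ z - 1 := by linarith
      gcongr
  have hQ : 1 - Phi z = gtail z / Real.sqrt (2 * Real.pi) := by
    rw [← one_sub_Phi_eq]
    field_simp
  have A : 1 - Phi z ≤ Real.exp (-1 : ℝ) / (2 * Real.sqrt (2 * Real.pi)) * Real.exp (-z / 2) := by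
    rw [hQ]
    have : gtail z ≤ Real.exp (-1) * Real.exp (-z / 2) / 2 := by
      refine hg.trans ?_
      rw [← Real.exp_add]
      gcongr
      nlinarith
    calc gtail z / Real.sqrt (2 * Real.pi)
        ≤ (Real.exp (-1) * Real.exp (-z / 2) / 2) / Real.sqrt (2 * Real.pi) := by gcongr
      _ = _ := by field_simp
  have B : (1 - Phi z) * (w * (Real.exp (w ^ 2 / 2) * gtail (-w)))
      ≤ (1 / 2) * Real.exp (-(1 / 2) : ℝ) * Real.exp (-z / 2) := by
    calc (1 - Phi z) * (w * (Real.exp (w ^ 2 / 2) * gtail (-w)))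
        ≤ (1 - Phi z) * ((z - 1) * (Real.exp ((z - 1) ^ 2 / 2) * Real.sqrt (2 * Real.pi))) :=
          mul_le_mul_of_nonneg_left hle (by linarith)
      _ = (z - 1) * Real.exp ((z - 1) ^ 2 / 2) * gtail z := by
          rw [← one_sub_Phi_eq]
          ring
      _ ≤ (z - 1) * Real.exp ((z - 1) ^ 2 / 2) * (Real.exp (-z ^ 2 / 2) / z) := by
          have h4 : 0 ≤ z - 1 := by linarith
          gcongr
      _ = (z - 1) / z * Real.exp (1 / 2 - z) := by
          have : Real.exp (1 / 2 - z) = Real.exp ((z - 1) ^ 2 / 2) * Real.exp (-z ^ 2 / 2) := by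
            rw [← Real.exp_add]
            congr 1
            ring
          rw [this]
          ring
      _ ≤ (1 / 2 * Real.exp ((z - 2) / 2)) * Real.exp (1 / 2 - z) := by
          refine mul_le_mul_of_nonneg_right ?_ (Real.exp_pos _).le
          have := Real.add_one_le_exp ((z - 2) / 2)
          rw [div_le_iff₀ (by linarith)]
          nlinarith
      _ = _ := by
          rw [mul_assoc, mul_assoc, ← Real.exp_add, ← Real.exp_add]
          congr 2
          ring
  linarith

lemma exp_le_quad_bound {s : ℝ} (hs : s ≤ 1) :
    Real.exp s ≤ 1 + s + (Real.exp 1 - 2) * s ^ 2 := by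
  have he := Real.exp_one_gt_d9
  rcases le_or_gt s 0 with h | h
  · have h1 := Real.quadratic_le_exp_of_nonneg (x := -s) (by linarith)
    have h2 : Real.exp s * Real.exp (-s) = 1 := by rw [← Real.exp_add]; simp
    have h3 : Real.exp s ≤ 1 + s + s ^ 2 / 2 := by
      have hp := Real.exp_pos s
      have hq : 0 < 1 + s + s ^ 2 / 2 := by nlinarith [sq_nonneg (s + 1)]
      have h4 : Real.exp s * (1 - s + s ^ 2 / 2) ≤ 1 := by
        rw [← h2]
        refine mul_le_mul_of_nonneg_left ?_ hp.le
        nlinarith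
      have h5 : 1 ≤ (1 + s + s ^ 2 / 2) * (1 - s + s ^ 2 / 2) := by
        nlinarith [sq_nonneg (s ^ 2)]
      have h6 : 0 < 1 - s + s ^ 2 / 2 := by nlinarith [sq_nonneg s]
      exact le_of_mul_le_mul_right (h4.trans h5) h6
    nlinarith [sq_nonneg s]
  · have hsum : ∀ x : ℝ, HasSum (fun n : ℕ => x ^ (n + 2) / ((n + 2).factorial : ℝ))
        (Real.exp x - (1 + x)) := by
      intro x
      have h0 : HasSum (fun n : ℕ => x ^ n / (n.factorial : ℝ)) (Real.exp x) := by
        rw [Real.exp_eq_exp_ℝ]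
        exact NormedSpace.expSeries_div_hasSum_exp x
      have := (hasSum_nat_add_iff' 2).2 h0
      simpa [Finset.sum_range_succ] using this
    have a := hsum s
    have b := (hsum 1).mul_left (s ^ 2)
    have := hasSum_le (fun n => ?_) a b
    · linarith
    · rw [pow_add, one_pow, mul_one_div]
      have hp : s ^ n ≤ 1 := pow_le_one₀ h.le hs
      gcongr
      nlinarith [sq_nonneg s]

/-- Bound on E|f_z'(Wbar)| for z > 2. -/
theorem expectation_abs_fz'_bound
    {Ω : Type*} [MeasureSpace Ω] [IsProbabilityMeasure (ℙ : Measure Ω)]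
    {n : ℕ} (ξ : Fin n → Ω → ℝ)
    (hmeas : ∀ i, Measurable (ξ i))
    (hindep : iIndepFun ξ ℙ)
    (hL2 : ∀ i, MemLp (ξ i) 2 ℙ)
    (hmean : ∀ i, ∫ ω, ξ i ω = 0)
    (hvar : ∑ i, ∫ ω, (ξ i ω) ^ 2 = 1)
    (z : ℝ) (hz : 2 < z) :
    (∫ ω, |fz' z (Wbar ξ ω)|)
      ≤ ((1 / 2) * Real.exp (-(1 / 2) : ℝ)
            + Real.exp (-1 : ℝ) / (2 * Real.sqrt (2 * Real.pi))
            + Real.exp (Real.exp 1 - 2))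
          * Real.exp (-z / 2) := by
  have hxm : ∀ i, Measurable (xbar ξ i) := fun i =>
    Measurable.ite (measurableSet_le (hmeas i) measurable_const) (hmeas i) measurable_const
  have hx1 : ∀ i ω, xbar ξ i ω ≤ 1 := by
    intro i ω
    unfold xbar
    split_ifs with h
    · exact h
    · exact zero_le_one
  have hind : iIndepFun (fun i => xbar ξ i) ℙ := by
    have := hindep.comp (fun _ x => if x ≤ 1 then x else 0) (fun _ =>
      Measurable.ite (measurableSet_le measurable_id measurable_const) measurable_id
        measurable_const)
    exact this
  have hWm : Measurable (Wbar ξ) := by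
    unfold Wbar
    exact Finset.measurable_sum _ fun i _ => hxm i
  have hWn : ∀ ω, Wbar ξ ω ≤ n := by
    intro ω
    calc Wbar ξ ω ≤ ∑ _i : Fin n, (1 : ℝ) := Finset.sum_le_sum fun i _ => hx1 i ω
      _ = n := by simp
  have hexpint : Integrable (fun ω => Real.exp (Wbar ξ ω)) ℙ := by
    refine Integrable.of_bound hWm.exp.aestronglyMeasurable (Real.exp n)
      (Filter.Eventually.of_forall fun ω => ?_)
    rw [Real.norm_eq_abs, abs_of_pos (Real.exp_pos _)]
    exact Real.exp_le_exp.2 (hWn ω)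
  have he := Real.exp_one_gt_d9
  have hone : ∀ i, mgf (xbar ξ i) ℙ 1 ≤ Real.exp ((Real.exp 1 - 2) * ∫ ω, (ξ i ω) ^ 2) := by
    intro i
    have i1 : Integrable (ξ i) ℙ := (hL2 i).integrable (by norm_num)
    have i2 : Integrable (fun ω => (ξ i ω) ^ 2) ℙ := (hL2 i).integrable_sq
    have i3 : Integrable (fun ω => 1 + ξ i ω) ℙ := (integrable_const _).add i1
    have i4 : Integrable (fun ω => (Real.exp 1 - 2) * (ξ i ω) ^ 2) ℙ := i2.const_mul _
    have : mgf (xbar ξ i) ℙ 1 ≤ ∫ ω, (1 + ξ i ω + (Real.exp 1 - 2) * (ξ i ω) ^ 2) := by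
      unfold mgf
      refine integral_mono_of_nonneg (Filter.Eventually.of_forall fun ω => (Real.exp_pos _).le)
        (i3.add i4) (Filter.Eventually.of_forall fun ω => ?_)
      simp only [one_mul]
      refine (exp_le_quad_bound (hx1 i ω)).trans ?_
      unfold xbar
      split_ifs with h
      · exact le_rfl
      · have : 0 ≤ (Real.exp 1 - 2) * (ξ i ω) ^ 2 := mul_nonneg (by linarith) (sq_nonneg _)
        push Not at h
        simp only [ne_eq, OfNat.ofNat_ne_zero, not_false_eq_true, zero_pow, mul_zero]
        linarith
    rw [integral_add i3 i4, integral_add (integrable_const _) i1, integral_const_mul,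
      hmean i] at this
    simp only [integral_const, probReal_univ, smul_eq_mul, mul_one, add_zero] at this
    refine this.trans ?_
    linarith [Real.add_one_le_exp ((Real.exp 1 - 2) * ∫ ω, (ξ i ω) ^ 2)]
  have hE : ∫ ω, Real.exp (Wbar ξ ω) ≤ Real.exp (Real.exp 1 - 2) := by
    have h1 := hind.mgf_sum (t := 1) hxm Finset.univ
    have h2 : ∫ ω, Real.exp (Wbar ξ ω) = mgf (∑ i, xbar ξ i) ℙ 1 := by
      unfold mgf Wbar
      simp
    rw [h2, h1]
    calc ∏ i, mgf (xbar ξ i) ℙ 1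
        ≤ ∏ i, Real.exp ((Real.exp 1 - 2) * ∫ ω, (ξ i ω) ^ 2) :=
          Finset.prod_le_prod (fun i _ => mgf_nonneg) fun i _ => hone i
      _ = Real.exp (Real.exp 1 - 2) := by
          rw [← Real.exp_sum, ← Finset.mul_sum, hvar, mul_one]
  set A := ((1 / 2) * Real.exp (-(1 / 2) : ℝ)
            + Real.exp (-1 : ℝ) / (2 * Real.sqrt (2 * Real.pi))) * Real.exp (-z / 2) with hA
  have hA0 : 0 ≤ A := by positivity
  have hi : Integrable (fun ω => Real.exp (-(z - 1)) * Real.exp (Wbar ξ ω)) ℙ :=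
    hexpint.const_mul _
  have hmain : (∫ ω, |fz' z (Wbar ξ ω)|)
      ≤ ∫ ω, (A + Real.exp (-(z - 1)) * Real.exp (Wbar ξ ω)) := by
    refine integral_mono_of_nonneg (Filter.Eventually.of_forall fun ω => abs_nonneg _)
      ((integrable_const A).add hi) (Filter.Eventually.of_forall fun ω => ?_)
    simp only
    rcases le_or_gt (Wbar ξ ω) (z - 1) with h | h
    · have := abs_fz'_le_left hz h
      have h2 : 0 ≤ Real.exp (-(z - 1)) * Real.exp (Wbar ξ ω) := by positivity
      linarith
    · have := abs_fz'_le_one (w := Wbar ξ ω) hz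
      have h2 : 1 ≤ Real.exp (-(z - 1)) * Real.exp (Wbar ξ ω) := by
        rw [← Real.exp_add]
        exact Real.one_le_exp (by linarith)
      linarith
  rw [integral_add (integrable_const A) hi,
    integral_const_mul (Real.exp (-(z - 1))) (fun ω => Real.exp (Wbar ξ ω))] at hmain
  simp only [integral_const, probReal_univ, smul_eq_mul, one_mul] at hmain
  have hfin : Real.exp (-(z - 1)) * ∫ ω, Real.exp (Wbar ξ ω)
      ≤ Real.exp (Real.exp 1 - 2) * Real.exp (-z / 2) := by
    rw [mul_comm]
    refine mul_le_mul hE (Real.exp_le_exp.2 (by linarith)) (Real.exp_pos _).le (Real.exp_pos _).le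
  rw [add_mul, ← hA]
  linarith
end

section
/- For every z > 2, the quantity R₂₁ = Σᵢ₌₁ⁿ ∫_{−∞}^1 E[1{W̄⁽ⁱ⁾ + x̄ᵢ ≤ z} − 1{W̄⁽ⁱ⁾ + t ≤ z}] K̄ᵢ(t) dt satisfies |R₂₁| ≤ 30 e^{1/2} · e^{−z/2} · (β₂ + β₃). -/
open MeasureTheory ProbabilityTheory Real

lemma exp_quad (x : ℝ) (hx : x ≤ 1) : exp x ≤ 1 + x + x ^ 2 := by
  by_cases h : -1 ≤ x
  · have := Real.abs_exp_sub_one_sub_id_le (abs_le.2 ⟨h, hx⟩)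
    have := abs_le.1 this
    linarith [this.2]
  · push Not at h
    have : exp x ≤ 1 := exp_le_one_iff.2 (by linarith)
    nlinarith

section abs
set_option linter.unusedSectionVars false
variable {Ω : Type*} [MeasurableSpace Ω] {μ : Measure Ω} [IsProbabilityMeasure μ]
  {ι : Type*} [Fintype ι] {Y : ι → Ω → ℝ}

lemma sum_le_card (hle : ∀ i ω, Y i ω ≤ 1) (s : Finset ι) (ω : Ω) : ∑ j ∈ s, Y j ω ≤ s.card := by
  calc ∑ j ∈ s, Y j ω ≤ ∑ j ∈ s, (1:ℝ) := Finset.sum_le_sum fun j _ => hle j ω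
    _ = s.card := by simp

lemma exp_integrable (hm : ∀ i, Measurable (Y i)) (hle : ∀ i ω, Y i ω ≤ 1) (s : Finset ι)
    (θ : ℝ) (h0 : 0 ≤ θ) : Integrable (fun ω => exp (θ * ∑ j ∈ s, Y j ω)) μ := by
  refine Integrable.of_bound (C := exp (θ * s.card)) (by fun_prop) (ae_of_all _ fun ω => ?_)
  rw [Real.norm_eq_abs, abs_of_pos (exp_pos _)]
  exact exp_le_exp.2 (mul_le_mul_of_nonneg_left (sum_le_card hle s ω) h0)

lemma exp_moment (hm : ∀ i, Measurable (Y i)) (hi : iIndepFun Y μ) (hle : ∀ i ω, Y i ω ≤ 1)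
    (hL2 : ∀ i, MemLp (Y i) 2 μ) (hmean : ∀ i, ∫ ω, Y i ω ∂μ ≤ 0) (s : Finset ι)
    (θ : ℝ) (h0 : 0 ≤ θ) (h1 : θ ≤ 1) :
    ∫ ω, exp (θ * ∑ j ∈ s, Y j ω) ∂μ ≤ exp (θ ^ 2 * ∑ j ∈ s, ∫ ω, Y j ω ^ 2 ∂μ) := by
  have h := hi.mgf_sum hm s (t := θ)
  simp only [mgf, Finset.sum_apply] at h
  rw [h, Finset.mul_sum, exp_sum]
  refine Finset.prod_le_prod (fun j _ => integral_nonneg fun ω => (exp_pos _).le) fun j _ => ?_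
  have hI := (hL2 j).integrable (by norm_num)
  have hI2 := (hL2 j).integrable_sq
  calc ∫ ω, exp (θ * Y j ω) ∂μ ≤ ∫ ω, (1 + θ * Y j ω + θ ^ 2 * Y j ω ^ 2) ∂μ := by
        refine integral_mono ?_ ?_ fun ω => ?_
        · simpa using exp_integrable hm hle {j} θ h0
        · exact ((integrable_const _).add (hI.const_mul _)).add (hI2.const_mul _)
        · have := exp_quad (θ * Y j ω) (by nlinarith [hle j ω])
          simpa [mul_pow] using this
    _ = 1 + θ * ∫ ω, Y j ω ∂μ + θ ^ 2 * ∫ ω, Y j ω ^ 2 ∂μ := by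
        have hA : Integrable (fun ω => 1 + θ * Y j ω) μ :=
          (integrable_const _).add (hI.const_mul _)
        rw [integral_add hA (hI2.const_mul _),
          integral_add (integrable_const _) (hI.const_mul _), integral_const_mul, integral_const_mul]
        simp
    _ ≤ θ ^ 2 * ∫ ω, Y j ω ^ 2 ∂μ + 1 := by nlinarith [hmean j]
    _ ≤ _ := add_one_le_exp _

noncomputable def fS (a α L w : ℝ) : ℝ := exp (w / 2) * max 0 (min (w - a + α) L)

lemma fS_nonneg (a α L w : ℝ) : 0 ≤ fS a α L w := by unfold fS; positivity

lemma fS_mono (a α L : ℝ) : Monotone (fS a α L) := by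
  intro x y h
  unfold fS
  gcongr

lemma fS_le (a α L w : ℝ) (hL : 0 ≤ L) : fS a α L w ≤ L * exp (w / 2) := by
  unfold fS
  rw [mul_comm]
  have : max 0 (min (w - a + α) L) ≤ L := max_le hL (min_le_right _ _)
  gcongr

lemma fS_meas (a α L : ℝ) : Measurable (fS a α L) := by
  unfold fS; fun_prop

/-- increment bound inside the window -/
lemma fS_incr (a α L u v : ℝ) (h0 : a - α ≤ u) (huv : u ≤ v) (hv : v ≤ a - α + L) :
    exp (u / 2) * (v - u) ≤ fS a α L v - fS a α L u ∧
    exp (v / 2) * (v - u) ≤ fS a α L v - fS a α L u := by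
  have e1 : fS a α L v = exp (v / 2) * (v - a + α) := by
    unfold fS; rw [min_eq_left (by linarith), max_eq_right (by linarith)]
  have e2 : fS a α L u = exp (u / 2) * (u - a + α) := by
    unfold fS; rw [min_eq_left (by linarith), max_eq_right (by linarith)]
  have h : exp (u / 2) ≤ exp (v / 2) := exp_le_exp.2 (by linarith)
  rw [e1, e2]
  constructor <;> nlinarith

lemma fS_key (a b α w y : ℝ) (hα : 0 < α) :
    exp (a / 2) * (if a ≤ w ∧ w ≤ b then 1 else 0) * (|y| * min α |y|) ≤
      y * (fS a α (b - a + 2 * α) w - fS a α (b - a + 2 * α) (w - y)) := by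
  have hmono := fS_mono a α (b - a + 2 * α)
  split_ifs with h
  · obtain ⟨h1, h2⟩ := h
    have he : exp (a / 2) ≤ exp (w / 2) := exp_le_exp.2 (by linarith)
    rcases le_total 0 y with hy | hy
    · rw [abs_of_nonneg hy]
      have hm0 : 0 ≤ min α y := le_min hα.le hy
      have hma : min α y ≤ α := min_le_left _ _
      have := (fS_incr a α (b - a + 2 * α) (w - min α y) w (by linarith) (by linarith)
        (by linarith)).2
      have h3 := hmono (show w - y ≤ w - min α y by linarith [min_le_right α y])
      have h4 : exp (a / 2) * min α y ≤ exp (w / 2) * min α y := by gcongr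
      nlinarith
    · rw [abs_of_nonpos hy]
      have hm0 : 0 ≤ min α (-y) := le_min hα.le (by linarith)
      have hma : min α (-y) ≤ α := min_le_left _ _
      have := (fS_incr a α (b - a + 2 * α) w (w + min α (-y)) (by linarith) (by linarith)
        (by linarith)).1
      have h3 := hmono (show w + min α (-y) ≤ w - y by linarith [min_le_right α (-y)])
      have h4 : exp (a / 2) * min α (-y) ≤ exp (w / 2) * min α (-y) := by gcongr
      nlinarith
  · simp only [mul_zero, zero_mul]
    rcases le_total 0 y with hy | hy
    · have h3 := hmono (show w - y ≤ w by linarith)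
      nlinarith
    · have h3 := hmono (show w ≤ w - y by linarith)
      nlinarith

lemma fS_mul_le (a α L w : ℝ) (hL : 0 ≤ L) : w * fS a α L w ≤ 0.74 * L * exp w := by
  rcases le_total w 0 with h | h
  · have := fS_nonneg a α L w
    have h1 : w * fS a α L w ≤ 0 := by nlinarith
    have : 0 ≤ 0.74 * L * exp w := by positivity
    linarith
  · have h1 := add_one_le_exp (w / 2 - 1)
    have h2 : exp (w / 2 - 1) = exp (-1) * exp (w / 2) := by rw [← exp_add]; ring_nf
    have h3 := Real.exp_neg_one_lt_d9
    have h4 : w ≤ 0.74 * exp (w / 2) := by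
      have := exp_pos (w / 2)
      nlinarith
    have h5 : exp w = exp (w / 2) * exp (w / 2) := by rw [← exp_add]; ring_nf
    calc w * fS a α L w ≤ (0.74 * exp (w / 2)) * (L * exp (w / 2)) :=
          mul_le_mul h4 (fS_le a α L w hL) (fS_nonneg _ _ _ _) (by positivity)
      _ = _ := by rw [h5]; ring

lemma stein (hm : ∀ i, Measurable (Y i)) (hi : iIndepFun Y μ) (hle : ∀ i ω, Y i ω ≤ 1)
    (hL2 : ∀ i, MemLp (Y i) 2 μ) (hmean : ∀ i, ∫ ω, Y i ω ∂μ ≤ 0)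
    (hvar : ∑ i, ∫ ω, Y i ω ^ 2 ∂μ ≤ 1) (m a b α : ℝ) (hmm : ∑ i, -∫ ω, Y i ω ∂μ ≤ m)
    (hab : a ≤ b) (hα : 0 < α)
    (hc : 3 / 5 ≤ ∑ i, ∫ ω, |Y i ω| * min α |Y i ω| ∂μ) :
    3 / 5 * μ.real {ω | a ≤ ∑ i, Y i ω ∧ ∑ i, Y i ω ≤ b} * exp (a / 2) ≤
      1.9 * α + (b - a + 2 * α) * (2.1 + 1.32 * m) := by
  classical
  set L := b - a + 2 * α with hL
  have hL0 : 0 ≤ L := by linarith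
  set W : Ω → ℝ := fun ω => ∑ i, Y i ω with hW
  set G : ι → Ω → ℝ := fun i ω => |Y i ω| * min α |Y i ω| with hG
  have hWm : Measurable W := by fun_prop
  have hGm : ∀ i, Measurable (G i) := fun i => by
    have := hm i
    fun_prop
  have hGb : ∀ i ω, |G i ω| ≤ α * |Y i ω| := fun i ω => by
    have h0 : 0 ≤ min α |Y i ω| := le_min hα.le (abs_nonneg _)
    rw [abs_of_nonneg (mul_nonneg (abs_nonneg _) h0), mul_comm]
    exact mul_le_mul_of_nonneg_right (min_le_left _ _) (abs_nonneg _)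
  have hGL2 : ∀ i, MemLp (G i) 2 μ := fun i => by
    refine MemLp.of_le (g := fun ω => α * Y i ω) ((hL2 i).const_mul α)
      (hGm i).aestronglyMeasurable (ae_of_all _ fun ω => ?_)
    simp only [Real.norm_eq_abs, abs_mul α, abs_of_pos hα]
    exact hGb i ω
  set S : Ω → ℝ := ∑ i, G i with hS
  have hSL2 : MemLp S 2 μ := memLp_finsetSum' _ fun i _ => hGL2 i
  have hES : ∫ ω, S ω ∂μ = ∑ i, ∫ ω, G i ω ∂μ := by
    simp only [hS, Finset.sum_apply]
    exact integral_finsetSum _ fun i _ => (hGL2 i).integrable (by norm_num)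
  set e := ∫ ω, S ω ∂μ with he
  have hGi : iIndepFun G μ :=
    hi.comp (fun _ y => |y| * min α |y|) (fun _ => by fun_prop)
  have hVar : ∫ ω, (S ω - e) ^ 2 ∂μ ≤ α ^ 2 := by
    rw [← variance_eq_integral hSL2.aemeasurable,
      IndepFun.variance_sum (fun i _ => hGL2 i) (fun i _ j _ hij => hGi.indepFun hij)]
    calc ∑ i, Var[G i; μ] ≤ ∑ i, α ^ 2 * ∫ ω, Y i ω ^ 2 ∂μ := by
          refine Finset.sum_le_sum fun i _ => ?_
          refine (variance_le_expectation_sq (hGm i).aestronglyMeasurable).trans ?_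
          rw [← integral_const_mul]
          refine integral_mono (hGL2 i).integrable_sq ((hL2 i).integrable_sq.const_mul _) fun ω => ?_
          have := hGb i ω
          have h2 : G i ω ^ 2 ≤ (α * |Y i ω|) ^ 2 := sq_le_sq' (by linarith [neg_abs_le (G i ω)])
            ((le_abs_self _).trans this)
          rw [mul_pow α, sq_abs (Y i ω)] at h2
          exact h2
      _ = α ^ 2 * ∑ i, ∫ ω, Y i ω ^ 2 ∂μ := by rw [Finset.mul_sum]
      _ ≤ α ^ 2 := by nlinarith [sq_nonneg α]
  have hE1 : ∫ ω, exp (W ω) ∂μ ≤ 2.7182818286 := by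
    have := exp_moment hm hi hle hL2 hmean Finset.univ 1 (by norm_num) le_rfl
    simp only [one_mul, one_pow] at this
    refine this.trans ((exp_le_exp.2 hvar).trans exp_one_lt_d9.le)
  have hI1 : Integrable (fun ω => exp (W ω)) μ := by
    simpa using exp_integrable (μ := μ) hm hle Finset.univ 1 (by norm_num)
  have hWY : ∀ j ω, W ω - Y j ω = ∑ i ∈ Finset.univ.erase j, Y i ω := fun j ω => by
    simp only [hW]; rw [← Finset.sum_erase_add _ _ (Finset.mem_univ j)]; ring
  have hfI : ∀ j, Integrable (fun ω => fS a α L (W ω - Y j ω)) μ := fun j => by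
    have h := (exp_integrable (μ := μ) hm hle (Finset.univ.erase j) (1 / 2) (by norm_num)).const_mul L
    refine h.mono' ?_ (ae_of_all _ fun ω => ?_)
    · exact ((fS_meas a α L).comp (hWm.sub (hm j))).aestronglyMeasurable
    · rw [Real.norm_eq_abs, abs_of_nonneg (fS_nonneg _ _ _ _)]
      have := fS_le a α L (W ω - Y j ω) hL0
      rw [hWY, div_eq_inv_mul, ← one_div] at this
      rw [hWY]
      exact this
  have hfE : ∀ j, ∫ ω, fS a α L (W ω - Y j ω) ∂μ ≤ 1.32 * L := fun j => by
    have h := (exp_integrable (μ := μ) hm hle (Finset.univ.erase j) (1 / 2) (by norm_num)).const_mul L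
    have h2 := exp_moment hm hi hle hL2 hmean (Finset.univ.erase j) (1 / 2) (by norm_num) (by norm_num)
    have h3 : ∑ i ∈ Finset.univ.erase j, ∫ ω, Y i ω ^ 2 ∂μ ≤ 1 :=
      (Finset.sum_le_sum_of_subset_of_nonneg (Finset.erase_subset _ _)
        fun i _ _ => integral_nonneg fun ω => sq_nonneg _).trans hvar
    have h4 : exp ((1 / 2) ^ 2 * ∑ i ∈ Finset.univ.erase j, ∫ ω, Y i ω ^ 2 ∂μ) ≤ 1.32 := by
      refine (exp_le_exp.2 (show _ ≤ (1 / 4 : ℝ) by linarith)).trans ?_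
      refine (exp_quad _ (by norm_num)).trans (by norm_num)
    calc ∫ ω, fS a α L (W ω - Y j ω) ∂μ
        ≤ ∫ ω, L * exp (1 / 2 * ∑ i ∈ Finset.univ.erase j, Y i ω) ∂μ := by
          refine integral_mono (hfI j) h fun ω => ?_
          have := fS_le a α L (W ω - Y j ω) hL0
          rw [hWY, div_eq_inv_mul, ← one_div] at this
          simpa only [hWY] using this
      _ ≤ 1.32 * L := by
          rw [integral_const_mul, mul_comm]
          exact mul_le_mul_of_nonneg_right (h2.trans h4) hL0
  have hind : ∀ j, IndepFun (Y j) (fun ω => fS a α L (W ω - Y j ω)) μ := fun j => by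
    have h := (hi.indepFun_finsetSum_of_notMem hm (Finset.notMem_erase j Finset.univ)).symm
    have h2 := h.comp measurable_id (fS_meas a α L)
    have h3 : (fun ω => fS a α L (W ω - Y j ω)) =
        fS a α L ∘ ∑ i ∈ Finset.univ.erase j, Y i := by
      funext ω
      rw [hWY, Function.comp_apply, Finset.sum_apply]
    rw [h3]
    exact h2
  have hYI : ∀ j, Integrable (Y j) μ := fun j => (hL2 j).integrable (by norm_num)
  have hYfI : ∀ j, Integrable (fun ω => Y j ω * fS a α L (W ω - Y j ω)) μ := fun j =>
    (hind j).integrable_mul (hYI j) (hfI j)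
  have hYfE : ∀ j, - ∫ ω, Y j ω * fS a α L (W ω - Y j ω) ∂μ ≤ (-∫ ω, Y j ω ∂μ) * (1.32 * L) :=
    fun j => by
    rw [(hind j).integral_fun_mul_eq_mul_integral (hm j).aestronglyMeasurable
      (hfI j).aestronglyMeasurable, ← neg_mul]
    exact mul_le_mul_of_nonneg_left (hfE j) (by linarith [hmean j])
  have hA : MeasurableSet {ω | a ≤ W ω ∧ W ω ≤ b} :=
    (measurableSet_le measurable_const hWm).inter (measurableSet_le hWm measurable_const)
  have hSe : Integrable (fun ω => (S ω - e) ^ 2) μ := (hSL2.sub (memLp_const e)).integrable_sq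
  have hpt : ∀ ω, 3 / 5 * exp (a / 2) * ({ω | a ≤ W ω ∧ W ω ≤ b}.indicator 1 ω : ℝ) ≤
      0.74 * L * exp (W ω) - ∑ j, Y j ω * fS a α L (W ω - Y j ω)
        + (α / 2 * exp (W ω) + 1 / (2 * α) * (S ω - e) ^ 2) := fun ω => by
    have h1 : exp (a / 2) * (if a ≤ W ω ∧ W ω ≤ b then 1 else 0) * S ω ≤
        W ω * fS a α L (W ω) - ∑ j, Y j ω * fS a α L (W ω - Y j ω) := by
      have : W ω * fS a α L (W ω) = ∑ j, Y j ω * fS a α L (W ω) := by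
        rw [← Finset.sum_mul]
      rw [this, ← Finset.sum_sub_distrib, hS, Finset.sum_apply, Finset.mul_sum]
      refine Finset.sum_le_sum fun j _ => ?_
      rw [← mul_sub]
      exact fS_key a b α (W ω) (Y j ω) hα
    have h2 := fS_mul_le a α L (W ω) hL0
    have h3 : 0 ≤ α / 2 * exp (W ω) + 1 / (2 * α) * (S ω - e) ^ 2 := by positivity
    by_cases hω : a ≤ W ω ∧ W ω ≤ b
    · have h5 : exp (W ω) = exp (W ω / 2) ^ 2 := by rw [← exp_nat_mul]; ring_nf
      have h6 : exp (W ω / 2) * (e - S ω) ≤ α / 2 * exp (W ω) + 1 / (2 * α) * (S ω - e) ^ 2 := by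
        rw [h5]
        have : α / 2 * exp (W ω / 2) ^ 2 + 1 / (2 * α) * (S ω - e) ^ 2
          - exp (W ω / 2) * (e - S ω) = 1 / (2 * α) * (α * exp (W ω / 2) - (e - S ω)) ^ 2 := by
          field_simp; ring
        have h7 : 0 ≤ 1 / (2 * α) * (α * exp (W ω / 2) - (e - S ω)) ^ 2 := by positivity
        linarith
      have h8 : exp (a / 2) ≤ exp (W ω / 2) := exp_le_exp.2 (by linarith [hω.1])
      have h9 : exp (a / 2) * (e - S ω) ≤ α / 2 * exp (W ω) + 1 / (2 * α) * (S ω - e) ^ 2 := by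
        rcases le_total 0 (e - S ω) with h | h
        · exact (mul_le_mul_of_nonneg_right h8 h).trans h6
        · exact (mul_nonpos_of_nonneg_of_nonpos (exp_pos _).le h).trans h3
      rw [Set.indicator_of_mem (by exact hω)]
      rw [if_pos hω] at h1
      have h10 : 3 / 5 * exp (a / 2) ≤ e * exp (a / 2) :=
        mul_le_mul_of_nonneg_right (by rw [hES]; exact hc) (exp_pos _).le
      simp only [Pi.one_apply]
      nlinarith
    · rw [Set.indicator_of_notMem (by exact hω)]
      rw [if_neg hω] at h1
      nlinarith
  have hsumI : Integrable (fun ω => ∑ j, Y j ω * fS a α L (W ω - Y j ω)) μ :=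
    integrable_finsetSum _ fun j _ => hYfI j
  have hR1 : Integrable (fun ω => 0.74 * L * exp (W ω) - ∑ j, Y j ω * fS a α L (W ω - Y j ω)) μ :=
    (hI1.const_mul _).sub hsumI
  have hR2 : Integrable (fun ω => α / 2 * exp (W ω) + 1 / (2 * α) * (S ω - e) ^ 2) μ :=
    (hI1.const_mul _).add (hSe.const_mul _)
  have hIneq := integral_mono (μ := μ)
    (((integrable_const (1 : ℝ)).indicator hA).const_mul (3 / 5 * exp (a / 2))) (hR1.add hR2) hpt
  simp only [Pi.add_apply] at hIneq
  rw [integral_add hR1 hR2, integral_sub (hI1.const_mul _) hsumI,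
    integral_add (hI1.const_mul _) (hSe.const_mul _), integral_finsetSum _ fun j _ => hYfI j,
    integral_const_mul, integral_const_mul, integral_const_mul, integral_const_mul] at hIneq
  have hP : ∫ ω, ({ω | a ≤ W ω ∧ W ω ≤ b}.indicator 1 ω : ℝ) ∂μ =
    μ.real {ω | a ≤ W ω ∧ W ω ≤ b} := integral_indicator_one hA
  have hsum : - ∑ j, ∫ ω, Y j ω * fS a α L (W ω - Y j ω) ∂μ ≤ m * (1.32 * L) := by
    rw [← Finset.sum_neg_distrib]
    refine (Finset.sum_le_sum fun j _ => hYfE j).trans ?_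
    rw [← Finset.sum_mul]
    exact mul_le_mul_of_nonneg_right hmm (by positivity)
  have hq : 1 / (2 * α) * ∫ ω, (S ω - e) ^ 2 ∂μ ≤ α / 2 := by
    calc _ ≤ 1 / (2 * α) * α ^ 2 := by gcongr
      _ = α / 2 := by field_simp
  have hP' : 3 / 5 * exp (a / 2) * μ.real {ω | a ≤ W ω ∧ W ω ≤ b} ≤
     0.74 * L * (∫ ω, exp (W ω) ∂μ) - ∑ j, ∫ ω, Y j ω * fS a α L (W ω - Y j ω) ∂μ +
     (α / 2 * (∫ ω, exp (W ω) ∂μ) + 1 / (2 * α) * ∫ ω, (S ω - e) ^ 2 ∂μ) := by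
    rw [← hP]; exact hIneq
  have hk1 : 0.74 * L * (∫ ω, exp (W ω) ∂μ) ≤ 2.1 * L := by
    have : 0.74 * L * (∫ ω, exp (W ω) ∂μ) ≤ 0.74 * L * 2.7182818286 := by gcongr
    linarith
  have hk2 : α / 2 * (∫ ω, exp (W ω) ∂μ) ≤ 1.4 * α := by
    have : α / 2 * (∫ ω, exp (W ω) ∂μ) ≤ α / 2 * 2.7182818286 := by gcongr
    linarith
  linarith

lemma chernoff (hm : ∀ i, Measurable (Y i)) (hi : iIndepFun Y μ) (hle : ∀ i ω, Y i ω ≤ 1)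
    (hL2 : ∀ i, MemLp (Y i) 2 μ) (hmean : ∀ i, ∫ ω, Y i ω ∂μ ≤ 0)
    (hvar : ∑ i, ∫ ω, Y i ω ^ 2 ∂μ ≤ 1) (a b : ℝ) :
    μ.real {ω | a ≤ ∑ i, Y i ω ∧ ∑ i, Y i ω ≤ b} ≤ exp (-a / 2) * 1.32 := by
  have hWm : Measurable (fun ω => ∑ i, Y i ω) := by fun_prop
  have hA : MeasurableSet {ω | a ≤ ∑ i, Y i ω ∧ ∑ i, Y i ω ≤ b} :=
    (measurableSet_le measurable_const hWm).inter (measurableSet_le hWm measurable_const)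
  rw [← integral_indicator_one hA]
  have h2 := exp_moment hm hi hle hL2 hmean Finset.univ (1 / 2) (by norm_num) (by norm_num)
  have h4 : exp ((1 / 2) ^ 2 * ∑ i, ∫ ω, Y i ω ^ 2 ∂μ) ≤ 1.32 := by
    refine (exp_le_exp.2 (show _ ≤ (1 / 4 : ℝ) by linarith)).trans ?_
    refine (exp_quad _ (by norm_num)).trans (by norm_num)
  calc ∫ ω, {ω | a ≤ ∑ i, Y i ω ∧ ∑ i, Y i ω ≤ b}.indicator 1 ω ∂μ
      ≤ ∫ ω, exp (-a / 2) * exp (1 / 2 * ∑ i, Y i ω) ∂μ := by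
        refine integral_mono ((integrable_const (1 : ℝ)).indicator hA)
          ((exp_integrable hm hle Finset.univ (1 / 2) (by norm_num)).const_mul _) fun ω => ?_
        by_cases hω : ω ∈ {ω | a ≤ ∑ i, Y i ω ∧ ∑ i, Y i ω ≤ b}
        · rw [Set.indicator_of_mem hω, ← exp_add]
          exact one_le_exp (by linarith [hω.1])
        · rw [Set.indicator_of_notMem hω]
          positivity
    _ ≤ _ := by
        rw [integral_const_mul]
        gcongr
        exact h2.trans h4

lemma conc (hm : ∀ i, Measurable (Y i)) (hi : iIndepFun Y μ) (hle : ∀ i ω, Y i ω ≤ 1)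
    (hL2 : ∀ i, MemLp (Y i) 2 μ) (hmean : ∀ i, ∫ ω, Y i ω ∂μ ≤ 0)
    (hvar : ∑ i, ∫ ω, Y i ω ^ 2 ∂μ ≤ 1) (δ a b : ℝ) (hmm : ∑ i, -∫ ω, Y i ω ∂μ ≤ δ)
    (hab : a ≤ b) (hδ : 0 < δ)
    (hc : 3 / 4 - 2 * δ ≤ ∑ i, ∫ ω, |Y i ω| * min δ |Y i ω| ∂μ) :
    μ.real {ω | a ≤ ∑ i, Y i ω ∧ ∑ i, Y i ω ≤ b} ≤ exp (-a / 2) * (5 * min 1 (b - a) + 20 * δ) := by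
  have hC := chernoff hm hi hle hL2 hmean hvar a b
  have hp := exp_pos (-a / 2)
  by_cases h1 : 1 ≤ b - a
  · rw [min_eq_left h1]
    refine hC.trans ?_
    gcongr
    linarith
  push Not at h1
  rw [min_eq_right h1.le]
  by_cases h2 : 0.07 ≤ δ
  · refine hC.trans ?_
    gcongr
    linarith
  push Not at h2
  have h := stein hm hi hle hL2 hmean hvar δ a b δ hmm hab hδ (by linarith)
  set p := μ.real {ω | a ≤ ∑ i, Y i ω ∧ ∑ i, Y i ω ≤ b}
  have he : exp (a / 2) * exp (-a / 2) = 1 := by rw [← exp_add]; ring_nf; simp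
  have h3 : p * exp (a / 2) ≤ 5 * (b - a) + 20 * δ := by nlinarith
  calc p = p * exp (a / 2) * exp (-a / 2) := by rw [mul_assoc, he, mul_one]
    _ ≤ (5 * (b - a) + 20 * δ) * exp (-a / 2) := by gcongr
    _ = _ := by ring

lemma indep_bound {X W : Ω → ℝ} (hX : Measurable X) (hW : Measurable W) (h : IndepFun X W μ)
    (k : ℝ × ℝ → ℝ) (hk : Measurable k) (hkb : ∀ p, |k p| ≤ 1) (ψ : ℝ → ℝ)
    (hψ : Integrable (fun ω => ψ (X ω)) μ)
    (hb : ∀ ω, |∫ ω', k (X ω, W ω') ∂μ| ≤ ψ (X ω)) :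
    |∫ ω, k (X ω, W ω) ∂μ| ≤ ∫ ω, ψ (X ω) ∂μ := by
  have hp := (indepFun_iff_map_prod_eq_prod_map_map hX.aemeasurable hW.aemeasurable).1 h
  have := Measure.isProbabilityMeasure_map (μ := μ) hX.aemeasurable
  have := Measure.isProbabilityMeasure_map (μ := μ) hW.aemeasurable
  have e1 : ∫ ω, k (X ω, W ω) ∂μ = ∫ ω, ∫ ω', k (X ω, W ω') ∂μ ∂μ := by
    rw [← integral_map (φ := fun ω => (X ω, W ω)) (hX.prodMk hW).aemeasurable
      hk.aestronglyMeasurable, hp, integral_prod _ (Integrable.of_bound (C := 1)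
        hk.aestronglyMeasurable (ae_of_all _ hkb)),
      integral_map hX.aemeasurable
        (hk.stronglyMeasurable.integral_prod_right' ).aestronglyMeasurable]
    congr 1
    funext ω
    exact integral_map (f := fun y => k (X ω, y)) hW.aemeasurable
      (hk.comp measurable_prodMk_left).aestronglyMeasurable
  rw [e1, ← Real.norm_eq_abs]
  exact norm_integral_le_of_norm_le hψ (ae_of_all _ hb)

lemma window (W : Ω → ℝ) (hW : Measurable W) (z x t : ℝ) :
    |∫ ω, ((if W ω + x ≤ z then (1 : ℝ) else 0) - (if W ω + t ≤ z then (1 : ℝ) else 0)) ∂μ| ≤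
      μ.real {ω | z - max x t ≤ W ω ∧ W ω ≤ z - min x t} := by
  have hA : MeasurableSet {ω | z - max x t ≤ W ω ∧ W ω ≤ z - min x t} :=
    (measurableSet_le measurable_const hW).inter (measurableSet_le hW measurable_const)
  rw [← integral_indicator_one hA]
  rw [← Real.norm_eq_abs]
  refine norm_integral_le_of_norm_le ((integrable_const (1 : ℝ)).indicator hA)
    (ae_of_all _ fun ω => ?_)
  rw [Real.norm_eq_abs]
  by_cases hω : ω ∈ {ω | z - max x t ≤ W ω ∧ W ω ≤ z - min x t}
  · rw [Set.indicator_of_mem hω]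
    split_ifs <;> simp
  · rw [Set.indicator_of_notMem hω]
    simp only [Set.mem_ofPred_eq, not_and_or, not_le] at hω
    rcases hω with hω | hω
    · rw [if_pos (by linarith [le_max_left x t]), if_pos (by linarith [le_max_right x t])]; simp
    · rw [if_neg (by linarith [min_le_left x t]), if_neg (by linarith [min_le_right x t])]; simp

lemma assoc {X : Ω → ℝ} (hX : Measurable X) (hL : MemLp X 2 μ) :
    (∫ ω, min 1 |X ω| ∂μ) * ∫ ω, X ω ^ 2 ∂μ ≤ ∫ ω, X ω ^ 2 * min 1 |X ω| ∂μ := by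
  set m := ∫ ω, min 1 |X ω| ∂μ with hm
  have hI2 := hL.integrable_sq
  have hu : ∀ ω, 0 ≤ min 1 |X ω| := fun ω => le_min zero_le_one (abs_nonneg _)
  have hI1 : Integrable (fun ω => min 1 |X ω|) μ := by
    refine Integrable.of_bound (C := 1) (by fun_prop) (ae_of_all _ fun ω => ?_)
    rw [Real.norm_eq_abs, abs_of_nonneg (hu ω)]; exact min_le_left _ _
  have hI3 : Integrable (fun ω => X ω ^ 2 * min 1 |X ω|) μ := by
    refine hI2.mono' (by fun_prop) (ae_of_all _ fun ω => ?_)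
    rw [Real.norm_eq_abs, abs_of_nonneg (mul_nonneg (sq_nonneg _) (hu ω))]
    exact mul_le_of_le_one_right (sq_nonneg _) (min_le_left _ _)
  have hm0 : 0 ≤ m := integral_nonneg hu
  have hm1 : m ≤ 1 := by
    have := integral_mono (μ := μ) hI1 (integrable_const 1) fun ω => min_le_left _ _
    simpa using this
  have key : ∫ ω, (m * X ω ^ 2 + (m ^ 2 * min 1 |X ω| - m ^ 3)) ∂μ ≤ ∫ ω, X ω ^ 2 * min 1 |X ω| ∂μ := by
    refine integral_mono ((hI2.const_mul m).add ((hI1.const_mul _).sub (integrable_const _))) hI3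
      fun ω => ?_
    simp only
    rw [← sq_abs (X ω)]
    have ha := abs_nonneg (X ω)
    suffices h : 0 ≤ (min 1 |X ω| - m) * (|X ω| ^ 2 - m ^ 2) by nlinarith
    rcases le_total m |X ω| with h | h
    · exact mul_nonneg (by linarith [le_min hm1 h]) (by nlinarith)
    · exact mul_nonneg_of_nonpos_of_nonpos (by linarith [min_le_right 1 |X ω|]) (by nlinarith)
  have hI4 : Integrable (fun ω => m ^ 2 * min 1 |X ω| - m ^ 3) μ :=
    (hI1.const_mul _).sub (integrable_const _)
  rw [integral_add (hI2.const_mul m) hI4, integral_sub (hI1.const_mul _) (integrable_const _),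
    integral_const_mul, integral_const_mul, ← hm] at key
  simp at key
  nlinarith
end abs

noncomputable def trc (x : ℝ) : ℝ := if x ≤ 1 then x else 0
noncomputable def bx2 (x : ℝ) : ℝ := if 1 < |x| then x ^ 2 else 0
noncomputable def bx3 (x : ℝ) : ℝ := if |x| ≤ 1 then |x| ^ 3 else 0

lemma trc_meas : Measurable trc :=
  Measurable.ite (measurableSet_le measurable_id measurable_const) measurable_id measurable_const
lemma bx2_meas : Measurable bx2 :=
  Measurable.ite (measurableSet_lt measurable_const (by fun_prop)) (by fun_prop) measurable_const
lemma bx3_meas : Measurable bx3 :=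
  Measurable.ite (measurableSet_le (by fun_prop) measurable_const) (by fun_prop) measurable_const

lemma trc_le_one (x : ℝ) : trc x ≤ 1 := by unfold trc; split_ifs <;> linarith
lemma trc_le (x : ℝ) : trc x ≤ x := by unfold trc; split_ifs <;> linarith
lemma abs_trc_le (x : ℝ) : |trc x| ≤ |x| := by unfold trc; split_ifs <;> simp
lemma bx2_nonneg (x : ℝ) : 0 ≤ bx2 x := by unfold bx2; split_ifs <;> positivity
lemma bx3_nonneg (x : ℝ) : 0 ≤ bx3 x := by unfold bx3; split_ifs <;> positivity
lemma bx2_le (x : ℝ) : bx2 x ≤ x ^ 2 := by unfold bx2; split_ifs <;> nlinarith [sq_nonneg x]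
lemma bx3_le (x : ℝ) : bx3 x ≤ x ^ 2 := by
  unfold bx3
  split_ifs
  · rw [← sq_abs x]; nlinarith [sq_nonneg |x|]
  · positivity

lemma neg_trc_le (x : ℝ) : -trc x ≤ -x + bx2 x := by
  have := bx2_nonneg x
  unfold trc
  split_ifs with h
  · linarith
  · push Not at h
    unfold bx2
    rw [if_pos (by rwa [abs_of_pos (by linarith)])]
    nlinarith

lemma trc_low (α x : ℝ) (hα : 0 < α) :
    x ^ 2 - bx2 x - bx3 x / (4 * α) ≤ |trc x| * min α |trc x| := by
  have h0 : 0 ≤ |trc x| * min α |trc x| := mul_nonneg (abs_nonneg _) (le_min hα.le (abs_nonneg _))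
  by_cases h : |x| ≤ 1
  · have ht : trc x = x := if_pos (le_of_abs_le h)
    rw [ht, bx2, bx3, if_pos h, if_neg (not_lt.2 h), ← sq_abs x]
    have ha := abs_nonneg x
    have hq : 0 ≤ |x| ^ 3 / (4 * α) := by positivity
    rcases le_total α |x| with h1 | h1
    · rw [min_eq_left h1]
      have : |x| * α - (|x| ^ 2 - 0 - |x| ^ 3 / (4 * α)) = |x| * (|x| - 2 * α) ^ 2 / (4 * α) := by
        field_simp; ring
      have h2 : 0 ≤ |x| * (|x| - 2 * α) ^ 2 / (4 * α) := by positivity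
      linarith
    · rw [min_eq_right h1]
      nlinarith
  · rw [bx2, bx3, if_neg h, if_pos (not_le.1 h)]
    simpa using h0

lemma trc_g (x : ℝ) : trc x ^ 2 * min 1 |trc x| ≤ bx2 x + bx3 x := by
  by_cases h : |x| ≤ 1
  · have ht : trc x = x := if_pos (le_of_abs_le h)
    rw [ht, bx2, bx3, if_pos h, if_neg (not_lt.2 h), min_eq_right h, ← sq_abs x]
    nlinarith
  · rw [bx2, bx3, if_neg h, if_pos (not_le.1 h), add_zero]
    have h1 : trc x ^ 2 ≤ x ^ 2 := sq_le_sq.2 (abs_trc_le x)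
    have h2 : min 1 |trc x| ≤ 1 := min_le_left _ _
    nlinarith [sq_nonneg (trc x)]

lemma sq_le_b (η x : ℝ) (hη : 0 < η) : x ^ 2 ≤ bx2 x + bx3 x / η + η ^ 2 := by
  by_cases h : |x| ≤ 1
  · rw [bx2, bx3, if_pos h, if_neg (not_lt.2 h), ← sq_abs x]
    have hq : 0 ≤ |x| ^ 3 / η := by positivity
    rcases le_total η |x| with h1 | h1
    · have : |x| ^ 2 ≤ |x| ^ 3 / η := by
        rw [le_div_iff₀ hη]
        nlinarith [sq_nonneg |x|]
      nlinarith [sq_nonneg η]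
    · nlinarith [abs_nonneg x]
  · rw [bx2, bx3, if_neg h, if_pos (not_le.1 h)]
    simp
    positivity

section main
variable {Ω : Type*} [MeasureSpace Ω] [IsProbabilityMeasure (ℙ : Measure Ω)]
    {n : ℕ} {ξ : Fin n → Ω → ℝ}
set_option linter.unusedSectionVars false

lemma xbar_eq (i : Fin n) (ω : Ω) : xbar ξ i ω = trc (ξ i ω) := rfl

lemma xbar_meas (hmeas : ∀ i, Measurable (ξ i)) (i : Fin n) : Measurable (xbar ξ i) :=
  trc_meas.comp (hmeas i)

lemma xbar_L2 (hmeas : ∀ i, Measurable (ξ i)) (hL2 : ∀ i, MemLp (ξ i) 2 ℙ) (i : Fin n) :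
    MemLp (xbar ξ i) 2 ℙ :=
  (hL2 i).of_le (xbar_meas hmeas i).aestronglyMeasurable (ae_of_all _ fun _ => abs_trc_le _)

lemma bx2_int (hmeas : ∀ i, Measurable (ξ i)) (hL2 : ∀ i, MemLp (ξ i) 2 ℙ) (i : Fin n) :
    Integrable (fun ω => bx2 (ξ i ω)) ℙ := by
  refine (hL2 i).integrable_sq.mono' (bx2_meas.comp (hmeas i)).aestronglyMeasurable
    (ae_of_all _ fun ω => ?_)
  rw [Real.norm_eq_abs, abs_of_nonneg (bx2_nonneg _)]
  exact bx2_le _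

lemma bx3_int (hmeas : ∀ i, Measurable (ξ i)) (hL2 : ∀ i, MemLp (ξ i) 2 ℙ) (i : Fin n) :
    Integrable (fun ω => bx3 (ξ i ω)) ℙ := by
  refine (hL2 i).integrable_sq.mono' (bx3_meas.comp (hmeas i)).aestronglyMeasurable
    (ae_of_all _ fun ω => ?_)
  rw [Real.norm_eq_abs, abs_of_nonneg (bx3_nonneg _)]
  exact bx3_le _

lemma beta2_eq : beta2 ξ = ∑ i, ∫ ω, bx2 (ξ i ω) := rfl
lemma beta3_eq : beta3 ξ = ∑ i, ∫ ω, bx3 (ξ i ω) := rfl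
lemma beta2_nonneg : 0 ≤ beta2 ξ := by
  rw [beta2_eq]; exact Finset.sum_nonneg fun i _ => integral_nonneg fun ω => bx2_nonneg _
lemma beta3_nonneg : 0 ≤ beta3 ξ := by
  rw [beta3_eq]; exact Finset.sum_nonneg fun i _ => integral_nonneg fun ω => bx3_nonneg _

lemma delta_pos (hmeas : ∀ i, Measurable (ξ i)) (hL2 : ∀ i, MemLp (ξ i) 2 ℙ)
    (hvar : ∑ i, ∫ ω, (ξ i ω) ^ 2 = 1) : 0 < beta2 ξ + beta3 ξ := by
  by_contra hcon
  have h2 := beta2_nonneg (ξ := ξ)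
  have h3 := beta3_nonneg (ξ := ξ)
  have e2 : beta2 ξ = 0 := by linarith
  have e3 : beta3 ξ = 0 := by linarith
  set η : ℝ := 1 / (n + 1) with hη
  have hη0 : 0 < η := by positivity
  have h : ∀ i, ∫ ω, (ξ i ω) ^ 2 ≤ (∫ ω, bx2 (ξ i ω)) + (∫ ω, bx3 (ξ i ω)) / η + η ^ 2 := fun i => by
    have hA : Integrable (fun ω => bx2 (ξ i ω) + bx3 (ξ i ω) / η) ℙ :=
      (bx2_int hmeas hL2 i).add ((bx3_int hmeas hL2 i).div_const _)
    have := integral_mono (hL2 i).integrable_sq (hA.add (integrable_const (η ^ 2)))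
      fun ω => sq_le_b η (ξ i ω) hη0
    simp only [Pi.add_apply] at this
    rw [integral_add hA (integrable_const _), integral_add (bx2_int hmeas hL2 i)
      ((bx3_int hmeas hL2 i).div_const _), integral_div] at this
    simpa using this
  have hs := Finset.sum_le_sum fun i (_ : i ∈ Finset.univ) => h i
  rw [hvar, Finset.sum_add_distrib, Finset.sum_add_distrib, ← Finset.sum_div, ← beta2_eq,
    ← beta3_eq, e2, e3] at hs
  simp at hs
  have hn : (0 : ℝ) ≤ n := Nat.cast_nonneg n
  have : (n + 1 : ℝ) * η = 1 := by rw [hη]; field_simp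
  nlinarith

noncomputable def Yt (ξ : Fin n → Ω → ℝ) (i j : Fin n) (ω : Ω) : ℝ :=
  if j = i then 0 else xbar ξ j ω

lemma Wbari_eq (i : Fin n) (ω : Ω) : Wbari ξ i ω = ∑ j, Yt ξ i j ω := by
  unfold Wbari Wbar Yt
  rw [← Finset.sum_erase_add _ _ (Finset.mem_univ i),
    ← Finset.sum_erase_add _ (fun j => if j = i then 0 else xbar ξ j ω) (Finset.mem_univ i)]
  simp only [if_true, add_zero, add_sub_cancel_right]
  refine Finset.sum_congr rfl fun j hj => ?_
  rw [if_neg (Finset.ne_of_mem_erase hj)]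

lemma xbar_conc (hmeas : ∀ i, Measurable (ξ i)) (hindep : iIndepFun ξ ℙ)
    (hL2 : ∀ i, MemLp (ξ i) 2 ℙ) (hmean : ∀ i, ∫ ω, ξ i ω = 0)
    (hvar : ∑ i, ∫ ω, (ξ i ω) ^ 2 = 1) (i : Fin n) (a b : ℝ) (hab : a ≤ b) :
    (ℙ : Measure Ω).real {ω | a ≤ Wbari ξ i ω ∧ Wbari ξ i ω ≤ b} ≤
      exp (-a / 2) * (5 * min 1 (b - a) + 20 * (beta2 ξ + beta3 ξ)) := by
  have hδ := delta_pos hmeas hL2 hvar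
  have hb2 := beta2_nonneg (ξ := ξ)
  have hb3 := beta3_nonneg (ξ := ξ)
  set δ := beta2 ξ + beta3 ξ with hδd
  simp only [Wbari_eq]
  have hxL := xbar_L2 hmeas hL2
  have hxI : ∀ j, Integrable (xbar ξ j) ℙ := fun j => (hxL j).integrable (by norm_num)
  have hξI : ∀ j, Integrable (ξ j) ℙ := fun j => (hL2 j).integrable (by norm_num)
  have hY0 : ∀ j, j = i → Yt ξ i j = fun _ => 0 := fun j h => by funext ω; simp [Yt, h]
  have hY1 : ∀ j, j ≠ i → Yt ξ i j = xbar ξ j := fun j h => by funext ω; simp [Yt, h]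
  have hxmean : ∀ j, ∫ ω, xbar ξ j ω ≤ 0 := fun j => by
    rw [← hmean j]
    exact integral_mono (hxI j) (hξI j) fun ω => trc_le _
  have hxneg : ∀ j, -∫ ω, xbar ξ j ω ≤ ∫ ω, bx2 (ξ j ω) := fun j => by
    have := integral_mono (hxI j).neg ((hξI j).neg.add (bx2_int hmeas hL2 j))
      fun ω => neg_trc_le (ξ j ω)
    simp only [Pi.add_apply, Pi.neg_apply] at this
    have hN : Integrable (fun ω => -ξ j ω) ℙ := (hξI j).neg
    rw [integral_neg, integral_add hN (bx2_int hmeas hL2 j), integral_neg, hmean] at this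
    linarith
  have hxsq : ∀ j, ∫ ω, xbar ξ j ω ^ 2 ≤ ∫ ω, ξ j ω ^ 2 := fun j =>
    integral_mono (hxL j).integrable_sq (hL2 j).integrable_sq fun ω => sq_le_sq.2 (abs_trc_le _)
  have hGI : ∀ j, Integrable (fun ω => |xbar ξ j ω| * min δ |xbar ξ j ω|) ℙ := fun j => by
    have := xbar_meas hmeas j
    refine ((hxI j).abs.const_mul δ).mono' (by fun_prop) (ae_of_all _ fun ω => ?_)
    have h0 : 0 ≤ min δ |xbar ξ j ω| := le_min hδ.le (abs_nonneg _)
    rw [Real.norm_eq_abs, abs_of_nonneg (mul_nonneg (abs_nonneg _) h0), mul_comm]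
    exact mul_le_mul_of_nonneg_right (min_le_left _ _) (abs_nonneg _)
  refine conc ?_ ?_ ?_ ?_ ?_ ?_ δ a b ?_ hab hδ ?_
  · intro j
    by_cases h : j = i
    · rw [hY0 j h]; exact measurable_const
    · rw [hY1 j h]; exact xbar_meas hmeas j
  · refine hindep.comp (fun j x => if j = i then 0 else trc x) (fun j => ?_)
    by_cases h : j = i
    · simp only [h, if_true]; exact measurable_const
    · simp only [h, if_false]; exact trc_meas
  · intro j ω
    unfold Yt
    split_ifs
    · exact zero_le_one
    · exact trc_le_one _
  · intro j
    by_cases h : j = i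
    · rw [hY0 j h]; exact memLp_const 0
    · rw [hY1 j h]; exact hxL j
  · intro j
    by_cases h : j = i
    · rw [hY0 j h]; simp
    · rw [hY1 j h]; exact hxmean j
  · rw [← hvar]
    refine Finset.sum_le_sum fun j _ => ?_
    by_cases h : j = i
    · rw [hY0 j h]; simp; exact integral_nonneg fun ω => sq_nonneg _
    · rw [hY1 j h]; exact hxsq j
  · refine le_trans (b := beta2 ξ) ?_ (by linarith)
    rw [beta2_eq]
    refine Finset.sum_le_sum fun j _ => ?_
    by_cases h : j = i
    · rw [hY0 j h]; simp; exact integral_nonneg fun ω => bx2_nonneg _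
    · rw [hY1 j h]; exact hxneg j
  · have hlow : ∀ j, (∫ ω, ξ j ω ^ 2) - (∫ ω, bx2 (ξ j ω)) - (∫ ω, bx3 (ξ j ω)) / (4 * δ) ≤
        ∫ ω, |xbar ξ j ω| * min δ |xbar ξ j ω| := fun j => by
      have hA : Integrable (fun ω => ξ j ω ^ 2 - bx2 (ξ j ω)) ℙ :=
        (hL2 j).integrable_sq.sub (bx2_int hmeas hL2 j)
      have := integral_mono (hA.sub ((bx3_int hmeas hL2 j).div_const (4 * δ))) (hGI j)
        fun ω => trc_low δ (ξ j ω) hδ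
      simp only [Pi.sub_apply] at this
      rwa [integral_sub hA ((bx3_int hmeas hL2 j).div_const (4 * δ)),
        integral_sub (hL2 j).integrable_sq (bx2_int hmeas hL2 j), integral_div] at this
    have hup : ∫ ω, |xbar ξ i ω| * min δ |xbar ξ i ω| ≤ δ := by
      have h1 : ∫ ω, xbar ξ i ω ^ 2 ≤ 1 := by
        refine (hxsq i).trans ?_
        rw [← hvar]
        exact Finset.single_le_sum (f := fun j => ∫ ω, ξ j ω ^ 2)
          (fun j _ => integral_nonneg fun ω => sq_nonneg _) (Finset.mem_univ i)
      have h2 := integral_mono (hGI i) (((integrable_const (1 : ℝ)).add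
        (hxL i).integrable_sq).const_mul (δ / 2)) fun ω => by
          show |xbar ξ i ω| * min δ |xbar ξ i ω| ≤ δ / 2 * (1 + xbar ξ i ω ^ 2)
          have h3 := mul_le_mul_of_nonneg_left (min_le_left δ |xbar ξ i ω|) (abs_nonneg (xbar ξ i ω))
          rw [← sq_abs (xbar ξ i ω)]
          nlinarith [mul_nonneg hδ.le (sq_nonneg (|xbar ξ i ω| - 1))]
      rw [integral_const_mul] at h2
      simp only [Pi.add_apply] at h2
      rw [integral_add (integrable_const _) (hxL i).integrable_sq] at h2
      simp at h2
      nlinarith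
    have hsum := Finset.sum_le_sum fun j (_ : j ∈ Finset.univ) => hlow j
    rw [Finset.sum_sub_distrib, Finset.sum_sub_distrib, hvar, ← Finset.sum_div, ← beta2_eq,
      ← beta3_eq, ← Finset.sum_erase_add _ _ (Finset.mem_univ i)] at hsum
    have hsplit : ∑ j, ∫ ω, |Yt ξ i j ω| * min δ |Yt ξ i j ω| =
        ∑ j ∈ Finset.univ.erase i, ∫ ω, |xbar ξ j ω| * min δ |xbar ξ j ω| := by
      rw [← Finset.sum_erase_add _ _ (Finset.mem_univ i), hY0 i rfl]
      simp only [abs_zero, zero_mul, integral_zero, add_zero]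
      refine Finset.sum_congr rfl fun j hj => ?_
      rw [hY1 j (Finset.ne_of_mem_erase hj)]
    rw [hsplit]
    have h4 : beta3 ξ / (4 * δ) ≤ 1 / 4 := by
      rw [div_le_iff₀ (by positivity)]; linarith
    linarith
end main

section final
variable {Ω : Type*} [MeasureSpace Ω] [IsProbabilityMeasure (ℙ : Measure Ω)]
    {n : ℕ} {ξ : Fin n → Ω → ℝ}
set_option linter.unusedSectionVars false

lemma Wbari_meas (hmeas : ∀ i, Measurable (ξ i)) (i : Fin n) : Measurable (Wbari ξ i) := by
  have := xbar_meas hmeas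
  unfold Wbari Wbar
  fun_prop

lemma xW_indep (hmeas : ∀ i, Measurable (ξ i)) (hindep : iIndepFun ξ ℙ) (i : Fin n) :
    IndepFun (xbar ξ i) (Wbari ξ i) ℙ := by
  have hx : iIndepFun (xbar ξ) ℙ := hindep.comp (fun _ => trc) (fun _ => trc_meas)
  have h := (hx.indepFun_finsetSum_of_notMem (xbar_meas hmeas)
    (Finset.notMem_erase i Finset.univ)).symm
  have h3 : Wbari ξ i = ∑ j ∈ Finset.univ.erase i, xbar ξ j := by
    funext ω
    unfold Wbari Wbar
    rw [Finset.sum_apply, ← Finset.sum_erase_add _ _ (Finset.mem_univ i), add_sub_cancel_right]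
  rw [h3]
  exact h

lemma min_abs_sub (x t : ℝ) : min 1 (max x t - min x t) ≤ min 1 |x| + min 1 |t| := by
  have h : max x t - min x t = |t - x| := max_sub_min_eq_abs' x t ▸ abs_sub_comm x t
  rw [h]
  have h1 : |t - x| ≤ |t| + |x| := abs_sub t x
  have hx := abs_nonneg x
  have ht := abs_nonneg t
  rcases le_total 1 |x| with h2 | h2 <;> rcases le_total 1 |t| with h3 | h3 <;>
    simp only [min_eq_left, min_eq_right, h2, h3]
  · linarith [min_le_left 1 |t - x|]
  · linarith [min_le_left 1 |t - x|]
  · linarith [min_le_left 1 |t - x|]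
  · linarith [min_le_right 1 |t - x|]

lemma D_bound (hmeas : ∀ i, Measurable (ξ i)) (hindep : iIndepFun ξ ℙ)
    (hL2 : ∀ i, MemLp (ξ i) 2 ℙ) (hmean : ∀ i, ∫ ω, ξ i ω = 0)
    (hvar : ∑ i, ∫ ω, (ξ i ω) ^ 2 = 1) (i : Fin n) (z t : ℝ) (ht : t ≤ 1) :
    |∫ ω, ((if Wbari ξ i ω + xbar ξ i ω ≤ z then (1 : ℝ) else 0)
          - (if Wbari ξ i ω + t ≤ z then (1 : ℝ) else 0))| ≤
      exp ((1 - z) / 2) * (5 * ((∫ ω, min 1 |xbar ξ i ω|) + min 1 |t|)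
        + 20 * (beta2 ξ + beta3 ξ)) := by
  have hδ := delta_pos hmeas hL2 hvar
  have hxm := xbar_meas hmeas i
  have hWm := Wbari_meas hmeas i
  have hI1 : Integrable (fun ω => min 1 |xbar ξ i ω|) ℙ := by
    refine Integrable.of_bound (C := 1) (by fun_prop) (ae_of_all _ fun ω => ?_)
    rw [Real.norm_eq_abs, abs_of_nonneg (le_min zero_le_one (abs_nonneg _))]; exact min_le_left _ _
  set k : ℝ × ℝ → ℝ := fun p => (if p.2 + p.1 ≤ z then (1 : ℝ) else 0)
    - (if p.2 + t ≤ z then (1 : ℝ) else 0) with hk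
  set ψ : ℝ → ℝ := fun x => exp ((1 - z) / 2) * (5 * (min 1 |x| + min 1 |t|)
    + 20 * (beta2 ξ + beta3 ξ)) with hψ
  have hkm : Measurable k := by
    refine Measurable.sub ?_ ?_
    · exact Measurable.ite (measurableSet_le (by fun_prop) measurable_const) measurable_const
        measurable_const
    · exact Measurable.ite (measurableSet_le (by fun_prop) measurable_const) measurable_const
        measurable_const
  have hψI : Integrable (fun ω => ψ (xbar ξ i ω)) ℙ :=
    (((hI1.add (integrable_const _)).const_mul 5).add (integrable_const _)).const_mul _
  have h := indep_bound hxm hWm (xW_indep hmeas hindep i) k hkm (fun p => by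
    simp only [hk]; split_ifs <;> simp) ψ hψI (fun ω => by
      refine (window (Wbari ξ i) hWm z (xbar ξ i ω) t).trans ?_
      refine (xbar_conc hmeas hindep hL2 hmean hvar i _ _ (by
        linarith [min_le_max (a := xbar ξ i ω) (b := t)])).trans ?_
      have e : z - min (xbar ξ i ω) t - (z - max (xbar ξ i ω) t) =
        max (xbar ξ i ω) t - min (xbar ξ i ω) t := by ring
      rw [e]
      simp only [hψ]
      have hmax : max (xbar ξ i ω) t ≤ 1 := max_le (trc_le_one _) ht
      have h0 : 0 ≤ min 1 |xbar ξ i ω| := le_min zero_le_one (abs_nonneg _)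
      have h0' : 0 ≤ min 1 |t| := le_min zero_le_one (abs_nonneg _)
      refine mul_le_mul (exp_le_exp.2 (by linarith)) ?_ ?_ (exp_pos _).le
      · linarith [min_abs_sub (xbar ξ i ω) t]
      · have : 0 ≤ min 1 (max (xbar ξ i ω) t - min (xbar ξ i ω) t) :=
          le_min zero_le_one (by linarith [min_le_max (a := xbar ξ i ω) (b := t)])
        linarith)
  refine h.trans (le_of_eq ?_)
  simp only [hψ]
  have hA : Integrable (fun ω => 5 * (min 1 |xbar ξ i ω| + min 1 |t|)) ℙ :=
    (hI1.add (integrable_const _)).const_mul 5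
  rw [integral_const_mul, integral_add hA (integrable_const _), integral_const_mul,
    integral_add hI1 (integrable_const _)]
  simp

/-- the kernel whose mean is `Kbar` -/
noncomputable def ker (x t : ℝ) : ℝ :=
  x * ((if 0 ≤ t ∧ t ≤ x then (1 : ℝ) else 0) - (if x ≤ t ∧ t < 0 then (1 : ℝ) else 0))

lemma ker_meas : Measurable (fun p : ℝ × ℝ => ker p.1 p.2) := by
  unfold ker
  refine measurable_fst.mul (Measurable.sub ?_ ?_)
  · exact Measurable.ite ((measurableSet_le measurable_const measurable_snd).inter
      (measurableSet_le measurable_snd measurable_fst)) measurable_const measurable_const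
  · exact Measurable.ite ((measurableSet_le measurable_fst measurable_snd).inter
      (measurableSet_lt measurable_snd measurable_const)) measurable_const measurable_const

lemma ker_zero (x t : ℝ) (h : t ∉ Set.uIcc 0 x) : ker x t = 0 := by
  unfold ker
  rw [if_neg, if_neg]
  · simp
  · rintro ⟨h1, h2⟩; exact h (Set.mem_uIcc.2 (Or.inr ⟨h1, h2.le⟩))
  · rintro ⟨h1, h2⟩; exact h (Set.mem_uIcc.2 (Or.inl ⟨h1, h2⟩))

lemma ker_abs_le (x t : ℝ) : |ker x t| ≤ |x| := by
  unfold ker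
  rw [abs_mul]
  refine mul_le_of_le_one_right (abs_nonneg _) ?_
  split_ifs <;> simp

lemma ker_lint (c d : ℝ) (hc : 0 ≤ c) (hd : 0 ≤ d) (x : ℝ) :
    ∫⁻ t, ENNReal.ofReal (c + d * min 1 |t|) * ‖ker x t‖ₑ ≤
      ENNReal.ofReal ((c + d * min 1 |x|) * x ^ 2) := by
  have hm : 0 ≤ min 1 |x| := le_min zero_le_one (abs_nonneg _)
  calc ∫⁻ t, ENNReal.ofReal (c + d * min 1 |t|) * ‖ker x t‖ₑ
      ≤ ∫⁻ t, (Set.uIcc 0 x).indicator (fun _ => ENNReal.ofReal ((c + d * min 1 |x|) * |x|)) t := by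
        refine lintegral_mono fun t => ?_
        by_cases h : t ∈ Set.uIcc 0 x
        · rw [Set.indicator_of_mem h, ENNReal.ofReal_mul (by positivity)]
          have ht : |t| ≤ |x| := by
            have := Set.abs_sub_left_of_mem_uIcc h
            simpa using this
          refine mul_le_mul' (ENNReal.ofReal_le_ofReal ?_) ?_
          · gcongr
          · rw [← ofReal_norm]
            exact ENNReal.ofReal_le_ofReal (ker_abs_le x t)
        · rw [Set.indicator_of_notMem h, ker_zero x t h]
          simp
    _ = ENNReal.ofReal ((c + d * min 1 |x|) * |x|) * ENNReal.ofReal |x| := by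
        rw [lintegral_indicator_const measurableSet_uIcc, Set.uIcc, Real.volume_Icc, max_sub_min_eq_abs, sub_zero]
    _ = _ := by
        rw [← ENNReal.ofReal_mul (by positivity), mul_assoc, ← pow_two, sq_abs]

lemma T_bound (hmeas : ∀ i, Measurable (ξ i)) (hL2 : ∀ i, MemLp (ξ i) 2 ℙ) (i : Fin n)
    (D : ℝ → ℝ) (c d : ℝ) (hc : 0 ≤ c) (hd : 0 ≤ d)
    (hD : ∀ t ≤ 1, |D t| ≤ c + d * min 1 |t|) :
    |∫ t in Set.Iic (1 : ℝ), D t * Kbar ξ i t| ≤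
      c * (∫ ω, xbar ξ i ω ^ 2) + d * ∫ ω, xbar ξ i ω ^ 2 * min 1 |xbar ξ i ω| := by
  have hxm := xbar_meas hmeas i
  have hI2 := (xbar_L2 hmeas hL2 i).integrable_sq
  have hu : ∀ ω, 0 ≤ min 1 |xbar ξ i ω| := fun ω => le_min zero_le_one (abs_nonneg _)
  have hI3 : Integrable (fun ω => xbar ξ i ω ^ 2 * min 1 |xbar ξ i ω|) ℙ := by
    refine hI2.mono' (by fun_prop) (ae_of_all _ fun ω => ?_)
    rw [Real.norm_eq_abs, abs_of_nonneg (mul_nonneg (sq_nonneg _) (hu ω))]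
    exact mul_le_of_le_one_right (sq_nonneg _) (min_le_left _ _)
  have hI4 : Integrable (fun ω => (c + d * min 1 |xbar ξ i ω|) * xbar ξ i ω ^ 2) ℙ := by
    have := (hI2.const_mul c).add (hI3.const_mul d)
    refine this.congr (ae_of_all _ fun ω => ?_)
    simp only [Pi.add_apply]; ring
  have hRHS : c * (∫ ω, xbar ξ i ω ^ 2) + d * ∫ ω, xbar ξ i ω ^ 2 * min 1 |xbar ξ i ω| =
      ∫ ω, (c + d * min 1 |xbar ξ i ω|) * xbar ξ i ω ^ 2 := by
    rw [← integral_const_mul, ← integral_const_mul,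
      ← integral_add (hI2.const_mul c) (hI3.const_mul d)]
    congr 1; funext ω; ring
  have h0 : ∀ ω, 0 ≤ (c + d * min 1 |xbar ξ i ω|) * xbar ξ i ω ^ 2 := fun ω => by
    have := hu ω
    positivity
  rw [hRHS, ← ENNReal.ofReal_le_ofReal_iff (integral_nonneg h0), ← Real.norm_eq_abs,
    ofReal_norm, ofReal_integral_eq_lintegral_ofReal hI4 (ae_of_all _ h0)]
  have hφm : Measurable (fun t : ℝ => ENNReal.ofReal (c + d * min 1 |t|)) := by fun_prop
  have hkm : Measurable (fun p : ℝ × Ω => ker (xbar ξ i p.2) p.1) :=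
    ker_meas.comp ((hxm.comp measurable_snd).prodMk measurable_fst)
  calc ‖∫ t in Set.Iic (1 : ℝ), D t * Kbar ξ i t‖ₑ
      ≤ ∫⁻ t in Set.Iic (1 : ℝ), ‖D t * Kbar ξ i t‖ₑ := enorm_integral_le_lintegral_enorm _
    _ ≤ ∫⁻ t in Set.Iic (1 : ℝ), ∫⁻ ω, ENNReal.ofReal (c + d * min 1 |t|) *
          ‖ker (xbar ξ i ω) t‖ₑ := by
        refine setLIntegral_mono' measurableSet_Iic fun t ht => ?_
        have hkt : Measurable (fun ω => ker (xbar ξ i ω) t) := hkm.comp measurable_prodMk_left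
        rw [enorm_mul, lintegral_const_mul _ hkt.enorm]
        refine mul_le_mul' ?_ (enorm_integral_le_lintegral_enorm _)
        rw [← ofReal_norm]
        exact ENNReal.ofReal_le_ofReal (hD t ht)
    _ ≤ ∫⁻ t, ∫⁻ ω, ENNReal.ofReal (c + d * min 1 |t|) * ‖ker (xbar ξ i ω) t‖ₑ :=
        setLIntegral_le_lintegral _ _
    _ = ∫⁻ ω, ∫⁻ t, ENNReal.ofReal (c + d * min 1 |t|) * ‖ker (xbar ξ i ω) t‖ₑ := by
        refine lintegral_lintegral_swap (Measurable.aemeasurable ?_)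
        exact (hφm.comp measurable_fst).mul hkm.enorm
    _ ≤ _ := lintegral_mono fun ω => ker_lint c d hc hd _
end final

/-- Bound (4.25) on R21. -/
theorem R21_bound
    {Ω : Type*} [MeasureSpace Ω] [IsProbabilityMeasure (ℙ : Measure Ω)]
    {n : ℕ} (ξ : Fin n → Ω → ℝ)
    (hmeas : ∀ i, Measurable (ξ i))
    (hindep : iIndepFun ξ ℙ)
    (hL2 : ∀ i, MemLp (ξ i) 2 ℙ)
    (hmean : ∀ i, ∫ ω, ξ i ω = 0)
    (hvar : ∑ i, ∫ ω, (ξ i ω) ^ 2 = 1)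
    (z : ℝ) (hz : 2 < z) :
    |∑ i, ∫ t in Set.Iic (1 : ℝ),
        (∫ ω, ((if Wbari ξ i ω + xbar ξ i ω ≤ z then (1 : ℝ) else 0)
          - (if Wbari ξ i ω + t ≤ z then (1 : ℝ) else 0))) * Kbar ξ i t|
      ≤ 30 * Real.exp ((1 / 2) : ℝ) * Real.exp (-z / 2) * (beta2 ξ + beta3 ξ) := by
  have hδ := delta_pos hmeas hL2 hvar
  have hxL := xbar_L2 hmeas hL2
  have hu : ∀ i ω, 0 ≤ min 1 |xbar ξ i ω| := fun i ω => le_min zero_le_one (abs_nonneg _)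
  have hmain : ∀ i, |∫ t in Set.Iic (1 : ℝ),
        (∫ ω, ((if Wbari ξ i ω + xbar ξ i ω ≤ z then (1 : ℝ) else 0)
          - (if Wbari ξ i ω + t ≤ z then (1 : ℝ) else 0))) * Kbar ξ i t| ≤
      exp ((1 - z) / 2) * (10 * ((∫ ω, bx2 (ξ i ω)) + ∫ ω, bx3 (ξ i ω))
        + 20 * (beta2 ξ + beta3 ξ) * ∫ ω, ξ i ω ^ 2) := by
    intro i
    have hm0 : 0 ≤ ∫ ω, min 1 |xbar ξ i ω| := integral_nonneg (hu i)
    have h := T_bound hmeas hL2 i _ (exp ((1 - z) / 2) * (5 * (∫ ω, min 1 |xbar ξ i ω|)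
        + 20 * (beta2 ξ + beta3 ξ))) (exp ((1 - z) / 2) * 5) (by positivity) (by positivity)
        (fun t ht => (D_bound hmeas hindep hL2 hmean hvar i z t ht).trans (le_of_eq (by ring)))
    refine h.trans ?_
    have h1 := assoc (xbar_meas hmeas i) (hxL i)
    have h2 : ∫ ω, xbar ξ i ω ^ 2 * min 1 |xbar ξ i ω| ≤
        (∫ ω, bx2 (ξ i ω)) + ∫ ω, bx3 (ξ i ω) := by
      rw [← integral_add (bx2_int hmeas hL2 i) (bx3_int hmeas hL2 i)]
      exact integral_mono_of_nonneg (ae_of_all _ fun ω => mul_nonneg (sq_nonneg _) (hu i ω))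
        ((bx2_int hmeas hL2 i).add (bx3_int hmeas hL2 i)) (ae_of_all _ fun ω => trc_g (ξ i ω))
    have h3 : ∫ ω, xbar ξ i ω ^ 2 ≤ ∫ ω, ξ i ω ^ 2 :=
      integral_mono (hxL i).integrable_sq (hL2 i).integrable_sq
        fun ω => sq_le_sq.2 (abs_trc_le _)
    have h4 := mul_le_mul_of_nonneg_left h3 hδ.le
    calc _ = exp ((1 - z) / 2) * (5 * ((∫ ω, min 1 |xbar ξ i ω|) * ∫ ω, xbar ξ i ω ^ 2)
          + 20 * ((beta2 ξ + beta3 ξ) * ∫ ω, xbar ξ i ω ^ 2)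
          + 5 * ∫ ω, xbar ξ i ω ^ 2 * min 1 |xbar ξ i ω|) := by ring
      _ ≤ _ := mul_le_mul_of_nonneg_left (by linarith) (exp_pos _).le
  refine (Finset.abs_sum_le_sum_abs _ _).trans ((Finset.sum_le_sum fun i _ => hmain i).trans ?_)
  rw [← Finset.mul_sum, Finset.sum_add_distrib, ← Finset.mul_sum, ← Finset.mul_sum,
    Finset.sum_add_distrib, hvar, ← beta2_eq, ← beta3_eq]
  have he : exp ((1 - z) / 2) = exp (1 / 2) * exp (-z / 2) := by rw [← exp_add]; ring_nf
  rw [he]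
  exact le_of_eq (by ring)
end

section
/- Σᵢ₌₁ⁿ ∫_{−∞}^1 E[min(1, |t| + |x̄ᵢ|)] K̄ᵢ(t) dt ≤ 4 (β₂ + β₃). -/
open MeasureTheory ProbabilityTheory Real

/-- The bound for a single variable. -/
lemma aux_single {Ω : Type*} [MeasureSpace Ω] [IsProbabilityMeasure (ℙ : Measure Ω)]
    (X : Ω → ℝ) (hX : Measurable X) (hX2 : MemLp X 2 ℙ) (m K : ℝ → ℝ)
    (hm : ∀ t, m t = ∫ ω, min 1 (|t| + |X ω|))
    (hK : ∀ t, K t = ∫ ω, X ω * ((if 0 ≤ t ∧ t ≤ X ω then (1 : ℝ) else 0)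
    - (if X ω ≤ t ∧ t < 0 then (1 : ℝ) else 0))) :
    ∫ t in Set.Iic (1 : ℝ), m t * K t ≤ 3 * ∫ ω, X ω ^ 2 * min 1 |X ω| := by
  have hsq : Integrable (fun ω => X ω ^ 2) ℙ := hX2.integrable_sq
  have hmin1 : Integrable (fun ω => min 1 |X ω|) ℙ := by
    refine Integrable.of_bound (C := 1) (by fun_prop) (ae_of_all _ fun ω => ?_)
    rw [Real.norm_eq_abs, abs_of_nonneg (by positivity)]
    exact min_le_left _ _
  have hf : Integrable (fun ω => X ω ^ 2 * min 1 |X ω|) ℙ := by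
    refine hsq.mono (by fun_prop) (ae_of_all _ fun ω => ?_)
    rw [norm_mul]
    refine mul_le_of_le_one_right (norm_nonneg _) ?_
    rw [Real.norm_eq_abs, abs_of_nonneg (by positivity)]
    exact min_le_left _ _
  set c := ∫ ω, min 1 |X ω| with hc
  have hc0 : 0 ≤ c := integral_nonneg fun ω => by positivity
  set B := ∫ ω, X ω ^ 2 * min 1 |X ω| with hB
  have hB0 : 0 ≤ B := integral_nonneg fun ω => by positivity
  have hm0 : ∀ t, 0 ≤ m t := fun t => by
    rw [hm]; exact integral_nonneg fun ω => by positivity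
  have hmle : ∀ t, m t ≤ min 1 |t| + c := fun t => by
    have h1 : min 1 |t| + c = ∫ ω, (min 1 |t| + min 1 |X ω|) := by
      rw [integral_add (integrable_const _) hmin1]; simp [hc]
    rw [hm, h1]
    refine integral_mono_of_nonneg (ae_of_all _ fun ω => by positivity)
      ((integrable_const _).add hmin1) (ae_of_all _ fun ω => ?_)
    have := abs_nonneg t
    have := abs_nonneg (X ω)
    simp only
    rcases le_total 1 |t| with h | h <;> rcases le_total 1 |X ω| with h' | h' <;>
      simp only [min_eq_left h, min_eq_left h', min_eq_right h, min_eq_right h', min_le_iff]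
    · left; linarith
    · left; linarith
    · left; linarith
    · right; linarith
  -- the dominating kernel
  let g : ℝ → Ω → ENNReal := fun t ω =>
    ENNReal.ofReal (min 1 |t| + c) * (if |t| ≤ |X ω| ∧ 0 ≤ t * X ω then ENNReal.ofReal |X ω| else 0)
  have hgmeas : Measurable (Function.uncurry g) := by
    apply Measurable.mul
    · fun_prop
    · refine Measurable.ite ?_ (by fun_prop) measurable_const
      have h1 : MeasurableSet {p : ℝ × Ω | |p.1| ≤ |X p.2|} :=
        measurableSet_le (by fun_prop) (by fun_prop)
      have h2 : MeasurableSet {p : ℝ × Ω | 0 ≤ p.1 * X p.2} :=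
        measurableSet_le (by fun_prop) (by fun_prop)
      exact h1.inter h2
  have hpt : ∀ t, ENNReal.ofReal (m t * K t) ≤ ∫⁻ ω, g t ω := fun t => by
    rw [ENNReal.ofReal_mul (hm0 t)]
    have h1 : ENNReal.ofReal (K t) ≤
        ∫⁻ ω, (if |t| ≤ |X ω| ∧ 0 ≤ t * X ω then ENNReal.ofReal |X ω| else 0) := by
      rw [hK]
      refine (ENNReal.ofReal_le_ofReal (le_abs_self _)).trans ?_
      rw [← Real.norm_eq_abs, ofReal_norm]
      refine (enorm_integral_le_lintegral_enorm _).trans (lintegral_mono fun ω => ?_)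
      rw [← ofReal_norm, Real.norm_eq_abs]
      by_cases ha : 0 ≤ t ∧ t ≤ X ω
      · have hb : ¬ (X ω ≤ t ∧ t < 0) := fun h => by linarith [ha.1, h.2]
        have hx : 0 ≤ X ω := ha.1.trans ha.2
        have hcnd : |t| ≤ |X ω| ∧ 0 ≤ t * X ω :=
          ⟨by rw [abs_of_nonneg ha.1, abs_of_nonneg hx]; exact ha.2, mul_nonneg ha.1 hx⟩
        simp [ha, hb, hcnd]
      · by_cases hb : X ω ≤ t ∧ t < 0
        · have hx : X ω ≤ 0 := hb.1.trans hb.2.le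
          have hcnd : |t| ≤ |X ω| ∧ 0 ≤ t * X ω :=
            ⟨by rw [abs_of_nonpos hb.2.le, abs_of_nonpos hx]; linarith [hb.1],
              mul_nonneg_of_nonpos_of_nonpos hb.2.le hx⟩
          rw [if_neg ha, if_pos hb, if_pos hcnd]
          simp
        · simp [ha, hb]
    calc _ ≤ ENNReal.ofReal (min 1 |t| + c) *
        ∫⁻ ω, (if |t| ≤ |X ω| ∧ 0 ≤ t * X ω then ENNReal.ofReal |X ω| else 0) :=
          mul_le_mul' (ENNReal.ofReal_le_ofReal (hmle t)) h1
      _ = _ := by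
        rw [← lintegral_const_mul' _ _ ENNReal.ofReal_ne_top]
  have hinner : ∀ ω, ∫⁻ t, g t ω ≤ ENNReal.ofReal (X ω ^ 2 * min 1 |X ω| + X ω ^ 2 * c) := fun ω => by
    calc ∫⁻ t, g t ω ≤ ∫⁻ t, (Set.uIcc 0 (X ω)).indicator
          (fun _ => ENNReal.ofReal ((min 1 |X ω| + c) * |X ω|)) t := by
          refine lintegral_mono fun t => ?_
          by_cases h : |t| ≤ |X ω| ∧ 0 ≤ t * X ω
          · have hmem : t ∈ Set.uIcc 0 (X ω) := by
              rw [Set.mem_uIcc]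
              rcases lt_trichotomy (X ω) 0 with hx | hx | hx
              · right
                have ht : t ≤ 0 := by by_contra hh; push Not at hh; nlinarith [h.2]
                have := h.1
                rw [abs_of_nonpos ht, abs_of_neg hx] at this
                exact ⟨by linarith, ht⟩
              · left
                have := h.1
                rw [hx, abs_zero] at this
                have : t = 0 := abs_eq_zero.1 (le_antisymm this (abs_nonneg _))
                simp [this, hx]
              · left
                have ht : 0 ≤ t := by by_contra hh; push Not at hh; nlinarith [h.2]
                have := h.1
                rw [abs_of_nonneg ht, abs_of_pos hx] at this
                exact ⟨ht, this⟩
            rw [Set.indicator_of_mem hmem]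
            simp only [g]
            rw [if_pos h, ← ENNReal.ofReal_mul (by positivity)]
            refine ENNReal.ofReal_le_ofReal ?_
            have := min_le_min_left 1 h.1
            gcongr
          · simp only [g]
            rw [if_neg h]; simp
      _ = ENNReal.ofReal ((min 1 |X ω| + c) * |X ω|) * ENNReal.ofReal |X ω| := by
          rw [lintegral_indicator_const measurableSet_uIcc, Real.volume_interval, sub_zero]
      _ = _ := by
          rw [← ENNReal.ofReal_mul (by positivity)]
          congr 1
          rw [← sq_abs (X ω)]; ring
  have hint2 : Integrable (fun ω => X ω ^ 2 * min 1 |X ω| + X ω ^ 2 * c) ℙ :=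
    hf.add (hsq.mul_const _)
  have hfin : ∫ ω, (X ω ^ 2 * min 1 |X ω| + X ω ^ 2 * c) ≤ 3 * B := by
    rw [integral_add hf (hsq.mul_const _), integral_mul_const]
    have h3 : (∫ ω, X ω ^ 2) * c ≤ 2 * B := by
      rw [← integral_mul_const]
      have h4 : ∀ ω, X ω ^ 2 * c ≤ X ω ^ 2 * min 1 |X ω| + B := fun ω => by
        have : X ω ^ 2 * min 1 |X ω| + B = ∫ ω', (X ω ^ 2 * min 1 |X ω| + X ω' ^ 2 * min 1 |X ω'|) := by
          rw [integral_add (integrable_const _) hf]; simp [hB]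
        rw [this, hc, ← integral_const_mul]
        refine integral_mono (hmin1.const_mul _) ((integrable_const _).add hf) fun ω' => ?_
        simp only
        rcases le_total (min 1 |X ω'|) (min 1 |X ω|) with h | h
        · have h5 := mul_le_mul_of_nonneg_left h (sq_nonneg (X ω))
          have : 0 ≤ X ω' ^ 2 * min 1 |X ω'| := by positivity
          linarith
        · rcases le_total (|X ω|) |X ω'| with h6 | h6
          · have h7 : X ω ^ 2 ≤ X ω' ^ 2 := sq_le_sq.2 h6
            have h8 : 0 ≤ min 1 |X ω'| := by positivity
            have : 0 ≤ X ω ^ 2 * min 1 |X ω| := by positivity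
            nlinarith
          · have h9 := le_antisymm h (min_le_min_left 1 h6)
            have : 0 ≤ X ω' ^ 2 * min 1 |X ω'| := by positivity
            rw [h9] at *
            linarith
      calc ∫ ω, X ω ^ 2 * c ≤ ∫ ω, (X ω ^ 2 * min 1 |X ω| + B) :=
            integral_mono (hsq.mul_const _) (hf.add (integrable_const _)) h4
        _ = 2 * B := by
            rw [integral_add hf (integrable_const _)]; simp [← hB]; ring
    linarith
  have hlin : ∫⁻ t in Set.Iic (1 : ℝ), ENNReal.ofReal (m t * K t) ≤ ENNReal.ofReal (3 * B) := by
    calc ∫⁻ t in Set.Iic (1 : ℝ), ENNReal.ofReal (m t * K t)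
        ≤ ∫⁻ t, ENNReal.ofReal (m t * K t) := setLIntegral_le_lintegral _ _
      _ ≤ ∫⁻ t, ∫⁻ ω, g t ω := lintegral_mono hpt
      _ = ∫⁻ ω, ∫⁻ t, g t ω := lintegral_lintegral_swap hgmeas.aemeasurable
      _ ≤ ∫⁻ ω, ENNReal.ofReal (X ω ^ 2 * min 1 |X ω| + X ω ^ 2 * c) := lintegral_mono hinner
      _ = ENNReal.ofReal (∫ ω, (X ω ^ 2 * min 1 |X ω| + X ω ^ 2 * c)) :=
          (ofReal_integral_eq_lintegral_ofReal hint2 (ae_of_all _ fun ω => by positivity)).symm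
      _ ≤ _ := ENNReal.ofReal_le_ofReal hfin
  by_cases hi : Integrable (fun t => m t * K t) (volume.restrict (Set.Iic (1 : ℝ)))
  · rw [integral_eq_lintegral_pos_part_sub_lintegral_neg_part hi]
    have := ENNReal.toReal_le_of_le_ofReal (by positivity) hlin
    have h0 : 0 ≤ (∫⁻ t in Set.Iic (1 : ℝ), ENNReal.ofReal (-(m t * K t))).toReal :=
      ENNReal.toReal_nonneg
    linarith
  · rw [integral_undef hi]; positivity

/-- Bound (4.23). -/
theorem min_kbar_integral_bound
    {Ω : Type*} [MeasureSpace Ω] [IsProbabilityMeasure (ℙ : Measure Ω)]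
    {n : ℕ} (ξ : Fin n → Ω → ℝ)
    (hmeas : ∀ i, Measurable (ξ i))
    (hindep : iIndepFun ξ ℙ)
    (hL2 : ∀ i, MemLp (ξ i) 2 ℙ)
    (hmean : ∀ i, ∫ ω, ξ i ω = 0)
    (hvar : ∑ i, ∫ ω, (ξ i ω) ^ 2 = 1) :
    (∑ i, ∫ t in Set.Iic (1 : ℝ), (∫ ω, min 1 (|t| + |xbar ξ i ω|)) * Kbar ξ i t)
      ≤ 4 * (beta2 ξ + beta3 ξ) := by
  have hbeta : beta2 ξ + beta3 ξ = ∑ i, ∫ ω, ((if 1 < |ξ i ω| then (ξ i ω) ^ 2 else 0) +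
      (if |ξ i ω| ≤ 1 then |ξ i ω| ^ 3 else 0)) := by
    rw [beta2, beta3, ← Finset.sum_add_distrib]
    refine Finset.sum_congr rfl fun i _ => (integral_add ?_ ?_).symm
    · refine (hL2 i).integrable_sq.mono (Measurable.aestronglyMeasurable ?_)
        (ae_of_all _ fun ω => ?_)
      · have := hmeas i
        exact Measurable.ite (measurableSet_lt (by fun_prop) (by fun_prop)) (by fun_prop)
          measurable_const
      · split_ifs
        · exact le_rfl
        · simp [sq_nonneg]
    · refine Integrable.of_bound (C := 1) (Measurable.aestronglyMeasurable ?_)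
        (ae_of_all _ fun ω => ?_)
      · have := hmeas i
        exact Measurable.ite (measurableSet_le (by fun_prop) (by fun_prop)) (by fun_prop)
          measurable_const
      · split_ifs with h
        · rw [Real.norm_eq_abs, abs_of_nonneg (by positivity)]
          exact pow_le_one₀ (abs_nonneg _) h
        · simp
  have hpt : ∀ i ω, ((if 1 < |ξ i ω| then (ξ i ω) ^ 2 else 0) +
      (if |ξ i ω| ≤ 1 then |ξ i ω| ^ 3 else 0)) = ξ i ω ^ 2 * min 1 |ξ i ω| := by
    intro i ω
    by_cases h : |ξ i ω| ≤ 1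
    · rw [if_neg (not_lt.2 h), if_pos h, min_eq_right h, ← sq_abs (ξ i ω)]; ring
    · rw [if_pos (not_le.1 h), if_neg h, min_eq_left (not_le.1 h).le]; ring
  simp_rw [hpt] at hbeta
  rw [hbeta, Finset.mul_sum]
  refine Finset.sum_le_sum fun i _ => ?_
  have hle : ∀ ω, |xbar ξ i ω| ≤ |ξ i ω| := fun ω => by
    unfold xbar; split_ifs
    · exact le_rfl
    · simp
  have hxm : Measurable (xbar ξ i) := by
    have := hmeas i
    exact Measurable.ite (measurableSet_le (by fun_prop) (by fun_prop)) (by fun_prop)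
      measurable_const
  have hx2 : MemLp (xbar ξ i) 2 ℙ :=
    (hL2 i).mono hxm.aestronglyMeasurable (ae_of_all _ hle)
  refine (aux_single (xbar ξ i) hxm hx2 _ (Kbar ξ i) (fun t => rfl) (fun t => rfl)).trans ?_
  have h0 : 0 ≤ ∫ ω, ξ i ω ^ 2 * min 1 |ξ i ω| := integral_nonneg fun ω => by positivity
  have h1 : ∫ ω, xbar ξ i ω ^ 2 * min 1 |xbar ξ i ω| ≤ ∫ ω, ξ i ω ^ 2 * min 1 |ξ i ω| := by
    refine integral_mono_of_nonneg (ae_of_all _ fun ω => by positivity) ?_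
      (ae_of_all _ fun ω => ?_)
    · have := hmeas i
      refine (hL2 i).integrable_sq.mono (by fun_prop) (ae_of_all _ fun ω => ?_)
      rw [norm_mul]
      refine mul_le_of_le_one_right (norm_nonneg _) ?_
      rw [Real.norm_eq_abs, abs_of_nonneg (by positivity)]
      exact min_le_left _ _
    · exact mul_le_mul (sq_le_sq.2 (hle ω)) (min_le_min_left 1 (hle ω)) (by positivity)
        (by positivity)
  linarith
end
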